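/- Let $K$ be an algebraically closed field and let $\Gamma$ be a Brauer tree of multiplicity one, i.e. a finite tree with a cyclic ordering of the edges at each vertex. Its quiver $Q$ has the edges of $\Gamma$ as vertices and, for every vertex $x$ of $\Gamma$ and every edge $i$ at $x$, an arrow from $i$ to the edge that follows $i$ in the cyclic order at $x$ (a loop if $x$ is a leaf); the arrows belonging to $x$ form an oriented cycle, called the $A$-cycle of $x$, and each vertex of $Q$ lies on exactly two $A$-cycles. Let $A=KQ/I$ be the basic Brauer tree algebra, where $ab$ denotes the path $a$ followed by $b$ and $I$ is generated by the products of consecutive arrows from different $A$-cycles and by the differences of the two full $A$-cycles starting at the same vertex of $Q$. Modules are left modules, and $e_i$ is the idempotent of the vertex $i$. Let $T$ be an indecomposable two-term partial tilting complex $P_0\xrightarrow{f}P_1$ over $A$ in degrees $0$ and $1$ (that is, a complex of finitely generated projective modules, indecomposable in $D^b(A)$, with $\operatorname{Hom}_{D^b(A)}(T,T[n])=0$ for all $n\ne 0$) that is the minimal projective presentation of an indecomposable non-projective module which is not isomorphic to $P/\operatorname{soc}(P)$ for any indecomposable projective module $P$. Write $P_0=\bigoplus_{i\in I}Ae_i$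 and $P_1=\bigoplus_{j\in J}Ae_j$ with sets $I,J$ of vertices of $Q$. The diagram of $T$ is the subgraph of $Q$ that consists of the vertices in $I\cup J$ and, for all $i\in I$, $j\in J$ such that $f$ has a nonzero component $Ae_i\to Ae_j$, of the vertices and arrows of the directed path from $i$ to $j$ along their common $A$-cycle (shorter than the full cycle). The elements of $I\cup J$ are the marked vertices of $T$, those of $I$ its sources and those of $J$ its sinks; a source or sink has degree one if exactly one arrow of the diagram starts or ends at it. Let $T_i$ and $T_j$ be two such complexes, and suppose that their diagrams have exactly one vertex $k$ in common. Then $$\operatorname{Hom}_{D^b(A)}(T_i,T_j[-1])=0=\operatorname{Hom}_{D^b(A)}(T_j,T_i[-1])$$ holds if and only if one of the following is true: $k$ is neither a marked vertex of $T_i$ nor a marked vertex of $T_j$; or $k$ is a degree-one sink of both $T_i$ and $T_j$; or $k$ is a degree-one source of both $T_i$ and $T_j$. -/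

import Mathlib

open CategoryTheory CategoryTheory.Limits

universe w u v

/-- A Brauer tree (of multiplicity one): a tree `graph` together with a cyclic ordering of the
edges at every vertex. A half-edge (an edge together with one of its two end points) is a dart `d`;
its end point is `d.fst` and its edge is `d.edge`. The permutation `next` sends the half-edge at
`v` of an edge to the half-edge at `v` of the edge that follows it in the cyclic order at `v`. -/
structure BrauerTree (V : Type v) where
  graph : SimpleGraph V
  isTree : graph.IsTree
  next : Equiv.Perm graph.Dart
  isCycleOn : ∀ x : V, next.IsCycleOn {d | d.fst = x}

namespace BrauerTree

variable {V : Type v} (B : BrauerTree V)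

/-- The vertices of the Brauer quiver: the edges of the tree. -/
abbrev Edge : Type v := B.graph.edgeSet

/-- The arrows of the Brauer quiver: every half-edge `d` gives an arrow, from its edge to the next
edge around `d.fst` (a loop if `d.fst` is a leaf). The arrows with a given `d.fst` are an `A`-cycle;
they form one orbit of `next`. -/
abbrev Arrow : Type v := B.graph.Dart

/-- The source of an arrow. -/
def src (d : B.Arrow) : B.Edge := ⟨d.edge, d.edge_mem⟩

/-- The target of an arrow. -/
def tgt (d : B.Arrow) : B.Edge := B.src (B.next d)

/-- The number of arrows of the cycle that contains `d`. -/
noncomputable def cycleLength (d : B.Arrow) : ℕ := Function.minimalPeriod B.next d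

section Algebra

variable (K : Type u) [Field K]

/-- The generator of the path algebra given by the trivial path at a vertex of the quiver. -/
noncomputable def genVertex (i : B.Edge) : FreeAlgebra K (B.Edge ⊕ B.Arrow) :=
  FreeAlgebra.ι K (Sum.inl i)

/-- The generator of the path algebra given by an arrow. -/
noncomputable def genArrow (d : B.Arrow) : FreeAlgebra K (B.Edge ⊕ B.Arrow) :=
  FreeAlgebra.ι K (Sum.inr d)

/-- The product of the `m` consecutive arrows of one cycle that start with `d`. -/
noncomputable def genPath (d : B.Arrow) (m : ℕ) : FreeAlgebra K (B.Edge ⊕ B.Arrow) :=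
  ((List.range m).map fun l => B.genArrow K ((B.next ^ l) d)).prod

/-- The first five relations present the path algebra of the Brauer quiver, in which `a * b` is
the path `a` followed by `b`; the last two generate the ideal of relations of the Brauer tree
algebra with multiplicity one. -/
inductive Rel : FreeAlgebra K (B.Edge ⊕ B.Arrow) → FreeAlgebra K (B.Edge ⊕ B.Arrow) → Prop
  | vertex_mul_self (i : B.Edge) : Rel (B.genVertex K i * B.genVertex K i) (B.genVertex K i)
  | vertex_mul_vertex (i j : B.Edge) (h : i ≠ j) : Rel (B.genVertex K i * B.genVertex K j) 0
  | sum_vertex : Rel (∑ᶠ i : B.Edge, B.genVertex K i) 1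
  | src_mul (d : B.Arrow) : Rel (B.genVertex K (B.src d) * B.genArrow K d) (B.genArrow K d)
  | mul_tgt (d : B.Arrow) : Rel (B.genArrow K d * B.genVertex K (B.tgt d)) (B.genArrow K d)
  /-- Consecutive arrows of different cycles have product zero. -/
  | arrow_mul_arrow (d d' : B.Arrow) (h : d.fst ≠ d'.fst) :
      Rel (B.genArrow K d * B.genArrow K d') 0
  /-- The two full cycles that start at a given vertex of the quiver are equal. -/
  | cycle_eq (d : B.Arrow) :
      Rel (B.genPath K d (B.cycleLength d)) (B.genPath K d.symm (B.cycleLength d.symm))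

/-- The basic Brauer tree algebra of `B`, with multiplicity one. -/
def Alg : Type (max u v) := RingQuot (Rel B K)

noncomputable instance : Ring (B.Alg K) := inferInstanceAs (Ring (RingQuot (Rel B K)))

noncomputable instance : Algebra K (B.Alg K) := inferInstanceAs (Algebra K (RingQuot (Rel B K)))

/-- The primitive idempotent `e_i`. -/
noncomputable def idem (i : B.Edge) : B.Alg K := RingQuot.mkAlgHom K (Rel B K) (B.genVertex K i)

/-- The indecomposable projective left module `A e_i`. -/
noncomputable def proj (i : B.Edge) : Submodule (B.Alg K) (B.Alg K) :=
  Submodule.span (B.Alg K) {B.idem K i}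

end Algebra

end BrauerTree

/-- The socle of a module: the sum of its simple submodules. -/
def moduleSocle (R : Type*) [Ring R] (M : Type*) [AddCommGroup M] [Module R M] : Submodule R M :=
  sSup {S | IsAtom S}

/-- A submodule `N` is superfluous if `N + L = M` only for `L = M`. -/
def IsSuperfluous {R : Type*} [Ring R] {M : Type*} [AddCommGroup M] [Module R M]
    (N : Submodule R M) : Prop :=
  ∀ L : Submodule R M, N ⊔ L = ⊤ → L = ⊤

section Complexes

variable {A : Type u} [Ring A]

/-- `Hom_{D(A)}(S, T[n]) = 0`. The bounded derived category of finitely generated modules is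
a full subcategory of the derived category of all modules. -/
def HomVanishes [HasDerivedCategory.{w} (ModuleCat.{u} A)]
    (S T : CochainComplex (ModuleCat.{u} A) ℤ) (n : ℤ) : Prop :=
  ∀ g : DerivedCategory.Q.obj S ⟶ (DerivedCategory.Q.obj T)⟦n⟧, g = 0

/-- `T` is an indecomposable two-term partial tilting complex, concentrated in degrees
`0` and `1`. -/
structure IsIndecTwoTermPartialTilting [HasDerivedCategory.{w} (ModuleCat.{u} A)]
    (T : CochainComplex (ModuleCat.{u} A) ℤ) : Prop where
  isZero : ∀ n : ℤ, n ≠ 0 → n ≠ 1 → IsZero (T.X n)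
  finite : ∀ n : ℤ, Module.Finite A (T.X n)
  projective : ∀ n : ℤ, Module.Projective A (T.X n)
  homVanishes : ∀ n : ℤ, n ≠ 0 → HomVanishes T T n
  indecomposable : Indecomposable (DerivedCategory.Q.obj T)

/-- The terms `T^0 → T^1` of the complex are the minimal projective presentation of an
indecomposable non-projective module `M` that is not isomorphic to `P / soc P` for any
indecomposable projective `P`. (That `T^0` and `T^1` are projective is part of
`IsIndecTwoTermPartialTilting`.) -/
def IsPresentation (T : CochainComplex (ModuleCat.{u} A) ℤ) : Prop :=
  ∃ (M : ModuleCat.{u} A) (p : T.X 1 →ₗ[A] M),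
    Indecomposable M ∧ ¬ Module.Projective A M ∧
    (∀ P : ModuleCat.{u} A, Indecomposable P → Module.Projective A P →
      IsEmpty (M ≃ₗ[A] P ⧸ moduleSocle A P)) ∧
    Function.Surjective p ∧ LinearMap.ker p = LinearMap.range (T.d 0 1).hom ∧
    IsSuperfluous (LinearMap.ker p) ∧ IsSuperfluous (LinearMap.ker (T.d 0 1).hom)

end Complexes

/-- Decompositions `T^0 = ⨁_{i ∈ I} A e_i` and `T^1 = ⨁_{j ∈ J} A e_j` of the two terms of a complex
over a Brauer tree algebra, from which its diagram is read off. -/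
structure TermDecomposition {V : Type v} (B : BrauerTree V) (K : Type u) [Field K]
    (T : CochainComplex (ModuleCat.{max u v} (B.Alg K)) ℤ) where
  I : Finset B.Edge
  J : Finset B.Edge
  equiv₀ : T.X 0 ≃ₗ[B.Alg K] (∀ i : I, B.proj K i.1)
  equiv₁ : T.X 1 ≃ₗ[B.Alg K] (∀ j : J, B.proj K j.1)

namespace TermDecomposition

variable {V : Type v} {B : BrauerTree V} {K : Type u} [Field K]
  {T : CochainComplex (ModuleCat.{max u v} (B.Alg K)) ℤ} (D : TermDecomposition B K T)

open Classical in
/-- The component `A e_i → A e_j` of the differential. -/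
noncomputable def component (i : D.I) (j : D.J) : B.proj K i.1 →ₗ[B.Alg K] B.proj K j.1 :=
  LinearMap.proj j ∘ₗ D.equiv₁.toLinearMap ∘ₗ (T.d 0 1).hom ∘ₗ D.equiv₀.symm.toLinearMap ∘ₗ
    LinearMap.single (B.Alg K) (fun i : D.I => B.proj K i.1) i

/-- The arrows of the diagram: those on the directed path `d, next d, …, next^(m-1) d` from `i`
to `j` along a cycle, where the differential has a nonzero component `A e_i → A e_j`. -/
def arrows : Set B.Arrow :=
  {a | ∃ (i : D.I) (j : D.J), D.component i j ≠ 0 ∧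
    ∃ (d : B.Arrow) (m : ℕ), B.src d = i.1 ∧ B.src ((B.next ^ m) d) = j.1 ∧
      m < B.cycleLength d ∧ ∃ l < m, a = (B.next ^ l) d}

/-- `x` is a marked vertex of the diagram. -/
def IsMarked (x : B.Edge) : Prop := x ∈ D.I ∨ x ∈ D.J

/-- The vertices of the diagram. -/
def vertices : Set B.Edge :=
  {x | D.IsMarked x ∨ ∃ a ∈ D.arrows, B.src a = x ∨ B.tgt a = x}

/-- The number of arrows of the diagram that start or end at `x`. -/
noncomputable def degree (x : B.Edge) : ℕ :=
  {a | a ∈ D.arrows ∧ (B.src a = x ∨ B.tgt a = x)}.ncard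

/-- `x` is a source of the diagram and an end point of it. -/
def IsDegreeOneSource (x : B.Edge) : Prop := x ∈ D.I ∧ D.degree x = 1

/-- `x` is a sink of the diagram and an end point of it. -/
def IsDegreeOneSink (x : B.Edge) : Prop := x ∈ D.J ∧ D.degree x = 1

end TermDecomposition

section DerivedHom

open CochainComplex CochainComplex.HomComplex DerivedCategory

variable {A : Type u} [Ring A] [HasDerivedCategory.{w} (ModuleCat.{u} A)]

/-- Morphisms `S ⟶ T[n]` in the derived category out of a K-projective complex are cohomology
classes of the Hom complex. -/
theorem homVanishes_iff_coboundaries (S T : CochainComplex (ModuleCat.{u} A) ℤ)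
    [S.IsKProjective] (n : ℤ) :
    HomVanishes S T n ↔ ∀ z : Cocycle S T n, z ∈ coboundaries S T n := by
  let e := Iso.homCongr ((quotientCompQhIso (ModuleCat.{u} A)).symm.app S)
      ((Q.commShiftIso n).symm.app T ≪≫ (quotientCompQhIso (ModuleCat.{u} A)).symm.app (T⟦n⟧))
  have he0 : ∀ g : Q.obj S ⟶ (Q.obj T)⟦n⟧, e g = 0 ↔ g = 0 := by
    intro g
    constructor
    · intro h
      have : g = e.symm (e g) := by simp
      rw [this, h]
      simp [e, Iso.homCongr]
    · rintro rfl
      simp [e, Iso.homCongr]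
  have hbij := (CochainComplex.IsKProjective.Qh_map_bijective S
      ((HomotopyCategory.quotient _ _).obj (T⟦n⟧))).comp (CohomologyClass.toHom_bijective S T n)
  have h0 : ∀ z : Cocycle S T n, Qh.map (CohomologyClass.toHom (CohomologyClass.mk z)) = 0 ↔
      z ∈ coboundaries S T n := by
    intro z
    rw [← CohomologyClass.mk_eq_zero_iff]
    constructor
    · intro h
      apply hbij.injective
      simpa using h
    · intro h
      simp [h]
  constructor
  · intro H z
    rw [← h0]
    have := H (e.symm (Qh.map (CohomologyClass.toHom (CohomologyClass.mk z))))
    rw [← he0] at this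
    simpa using this
  · intro H g
    rw [← he0]
    obtain ⟨c, hc⟩ := hbij.surjective (e g)
    obtain ⟨z, rfl⟩ := c.mk_surjective
    rw [← hc]
    exact (h0 z).2 (H z)

theorem IsIndecTwoTermPartialTilting.isKProjective {T : CochainComplex (ModuleCat.{u} A) ℤ}
    (hT : IsIndecTwoTermPartialTilting T) : T.IsKProjective := by
  have : T.IsStrictlyLE 1 := by
    rw [CochainComplex.isStrictlyLE_iff]
    exact fun i hi => hT.isZero i (by lia) (by lia)
  have : ∀ n, Projective (T.X n) := fun n => by
    have := hT.projective n
    exact (IsProjective.iff_projective (T.X n)).1 inferInstance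
  exact CochainComplex.isKProjective_of_projective T 1

/-- For complexes in degrees `0` and `1`, `Hom(S, T[-1])` consists of the maps `S^1 → T^0` whose
composites with both differentials vanish. -/
theorem homVanishes_neg_one_iff {S T : CochainComplex (ModuleCat.{u} A) ℤ}
    (hS : IsIndecTwoTermPartialTilting S) (hT : IsIndecTwoTermPartialTilting T) :
    HomVanishes S T (-1) ↔ ∀ g : S.X 1 →ₗ[A] T.X 0,
      g ∘ₗ (S.d 0 1).hom = 0 → (T.d 0 1).hom ∘ₗ g = 0 → g = 0 := by
  have := hS.isKProjective
  rw [homVanishes_iff_coboundaries]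
  have hcob : ∀ z : Cocycle S T (-1), z ∈ coboundaries S T (-1) ↔ z = 0 := by
    intro z
    rw [mem_coboundaries_iff z (-2) (by norm_num)]
    constructor
    · rintro ⟨β, hβ⟩
      have : β = 0 := by
        ext p q hpq : 1
        by_cases hp : p = 0 ∨ p = 1
        · exact (hT.isZero q (by lia) (by lia)).eq_of_tgt _ _
        · exact (hS.isZero p (by lia) (by lia)).eq_of_src _ _
      rw [this, δ_zero] at hβ
      exact Subtype.ext hβ.symm
    · rintro rfl
      exact ⟨0, by simp⟩
  simp only [hcob]
  constructor
  · intro H g h1 h2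
    let c : Cochain S T (-1) := Cochain.single (ModuleCat.ofHom g) (-1)
    have hc : δ (-1) 0 c = 0 := by
      rw [Cochain.δ_single _ (-1) 0 (by norm_num) 0 1 (by norm_num) (by norm_num)]
      have e1 : (ModuleCat.ofHom g) ≫ T.d 0 1 = 0 := by
        ext x
        exact LinearMap.congr_fun h2 x
      have e2 : S.d 0 1 ≫ (ModuleCat.ofHom g) = 0 := by
        ext x
        exact LinearMap.congr_fun h1 x
      rw [e1, e2]
      simp
    have := H (Cocycle.mk c 0 (by norm_num) hc)
    have h3 : c = 0 := congrArg Subtype.val this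
    have h4 : c.v 1 0 (by norm_num) = 0 := by rw [h3]; simp
    rw [Cochain.single_v] at h4
    simpa using congrArg ModuleCat.Hom.hom h4
  · intro H z
    have hz := z.δ_eq_zero 0
    have e1 := Cochain.congr_v hz 0 0 (by norm_num)
    have e2 := Cochain.congr_v hz 1 1 (by norm_num)
    rw [δ_v (-1) 0 (by norm_num) _ 0 0 (by norm_num) (-1) 1 (by norm_num) (by norm_num)] at e1
    rw [δ_v (-1) 0 (by norm_num) _ 1 1 (by norm_num) 0 2 (by norm_num) (by norm_num)] at e2
    have z1 : z.1.v 0 (-1) (by norm_num) = 0 :=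
      (hT.isZero (-1) (by norm_num) (by norm_num)).eq_of_tgt _ _
    have z2 : S.d 1 2 = 0 := (hS.isZero 2 (by norm_num) (by norm_num)).eq_of_tgt _ _
    simp only [z1, z2, zero_comp, zero_add, smul_zero, add_zero, Cochain.zero_v] at e1 e2
    have key := H (z.1.v 1 0 (by norm_num)).hom
      (by
        have : S.d 0 1 ≫ z.1.v 1 0 (by norm_num) = 0 := by simpa using e1
        exact congrArg ModuleCat.Hom.hom this)
      (by exact congrArg ModuleCat.Hom.hom e2)
    apply Subtype.ext
    ext p q hpq : 1
    by_cases hp : p = 1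
    · subst hp
      obtain rfl : q = 0 := by lia
      rw [show z.1.v 1 0 hpq = 0 from ModuleCat.hom_ext key]
      rfl
    · by_cases hp0 : p = 0
      · exact (hT.isZero q (by lia) (by lia)).eq_of_tgt _ _
      · exact (hS.isZero p hp0 hp).eq_of_src _ _

end DerivedHom

namespace BrauerTree

section Combinatorics

variable {V : Type v} (B : BrauerTree V)

theorem next_fst (d : B.Arrow) : (B.next d).fst = d.fst :=
  (B.isCycleOn d.fst).1.mapsTo rfl

theorem next_pow_fst (d : B.Arrow) (m : ℕ) : ((B.next ^ m) d).fst = d.fst := by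
  induction m with
  | zero => rfl
  | succ m ih => rw [pow_succ', Equiv.Perm.mul_apply, next_fst, ih]

theorem src_symm (d : B.Arrow) : B.src d.symm = B.src d :=
  Subtype.ext (SimpleGraph.Dart.edge_symm d)

theorem exists_src_eq (e : B.Edge) : ∃ d : B.Arrow, B.src d = e := by
  obtain ⟨e, he⟩ := e
  induction e using Sym2.ind with
  | _ x y => exact ⟨⟨(x, y), he⟩, rfl⟩

theorem src_eq_iff {d d' : B.Arrow} : B.src d = B.src d' ↔ d = d' ∨ d = d'.symm := by
  rw [← SimpleGraph.dart_edge_eq_iff]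
  exact Subtype.ext_iff

theorem eq_of_src_eq_of_fst_eq {d d' : B.Arrow} (h : B.src d = B.src d') (hf : d.fst = d'.fst) :
    d = d' := by
  rcases B.src_eq_iff.1 h with h | h
  · exact h
  · exact absurd (h ▸ hf : d'.symm.fst = d'.fst) d'.snd_ne_fst

theorem fst_symm_ne (d : B.Arrow) : d.symm.fst ≠ d.fst := d.snd_ne_fst

/-- Distinct edges share at most one vertex. -/
theorem fst_eq_of_src_eq {a a' b b' : B.Arrow} (ha : B.src a = B.src a') (hb : B.src b = B.src b')
    (hab : B.src a ≠ B.src b) (h : a.fst = b.fst) (h' : a'.fst = b'.fst) : a = a' ∧ b = b' := by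
  rcases B.src_eq_iff.1 ha with rfl | rfl
  · exact ⟨rfl, B.eq_of_src_eq_of_fst_eq hb (h.symm.trans h')⟩
  · rcases B.src_eq_iff.1 hb with rfl | rfl
    · exact absurd (h.trans h'.symm) a'.snd_ne_fst
    · exfalso
      apply hab
      have h1 : a' = b' := SimpleGraph.Dart.ext _ _ (Prod.ext h' h)
      rw [h1]

theorem next_pow_cycleLength (d : B.Arrow) : (B.next ^ B.cycleLength d) d = d := by
  rw [Equiv.Perm.coe_pow]; exact Function.iterate_minimalPeriod

theorem next_pow_mod (d : B.Arrow) (m : ℕ) :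
    (B.next ^ (m % B.cycleLength d)) d = (B.next ^ m) d := by
  rw [Equiv.Perm.coe_pow, Equiv.Perm.coe_pow]
  exact Function.iterate_mod_minimalPeriod_eq

theorem eq_of_next_pow_eq (d : B.Arrow) {m n : ℕ} (hm : m < B.cycleLength d)
    (hn : n < B.cycleLength d) (h : (B.next ^ m) d = (B.next ^ n) d) : m = n := by
  rw [Equiv.Perm.coe_pow, Equiv.Perm.coe_pow] at h
  exact Function.iterate_injOn_Iio_minimalPeriod hm hn h

section Finite

variable [Finite V]

instance : Finite B.Arrow :=
  Finite.of_injective (fun d : B.Arrow => d.toProd) fun _ _ => SimpleGraph.Dart.ext _ _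

theorem cycleLength_pos (d : B.Arrow) : 0 < B.cycleLength d :=
  Function.minimalPeriod_pos_of_mem_periodicPts (B.next.injective.mem_periodicPts d)

theorem exists_next_pow_eq {d d' : B.Arrow} (h : d.fst = d'.fst) :
    ∃ m < B.cycleLength d, (B.next ^ m) d = d' := by
  obtain ⟨n, hn⟩ := (B.isCycleOn d.fst).exists_pow_eq' (Set.toFinite _) rfl h.symm
  refine ⟨n % B.cycleLength d, Nat.mod_lt _ (B.cycleLength_pos d), ?_⟩
  rw [next_pow_mod, hn]

theorem cycleLength_next_pow (d : B.Arrow) (m : ℕ) :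
    B.cycleLength ((B.next ^ m) d) = B.cycleLength d := by
  rw [Equiv.Perm.coe_pow]
  exact Function.minimalPeriod_apply_iterate (B.next.injective.mem_periodicPts d) m

theorem cycleLength_eq {d d' : B.Arrow} (h : d.fst = d'.fst) :
    B.cycleLength d = B.cycleLength d' := by
  obtain ⟨m, -, rfl⟩ := B.exists_next_pow_eq h
  rw [cycleLength_next_pow]

end Finite

/-- The edge of `d` together with all edges on the side of its end point `d.snd`. -/
def branch (d : B.Arrow) : Set B.Edge :=
  {e | e = B.src d ∨ ∃ z ∈ e.1, (B.graph.deleteEdges {d.edge}).Reachable d.snd z}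

theorem src_mem_branch (d : B.Arrow) : B.src d ∈ B.branch d := Or.inl rfl

theorem not_reachable_delete (d : B.Arrow) :
    ¬ (B.graph.deleteEdges {d.edge}).Reachable d.snd d.fst := by
  have h := SimpleGraph.isAcyclic_iff_forall_isBridge.1 B.isTree.isAcyclic d.edge_mem
  intro hr
  exact h hr.symm

theorem reachable_of_mem_edge {d : B.Arrow} {e : B.Edge} (he : e ≠ B.src d) {z z' : V}
    (hz : z ∈ e.1) (hz' : z' ∈ e.1) : (B.graph.deleteEdges {d.edge}).Reachable z z' := by
  by_cases hzz : z = z'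
  · rw [hzz]
  · have h1 : e.1 = s(z, z') := (Sym2.mem_and_mem_iff hzz).1 ⟨hz, hz'⟩
    apply SimpleGraph.Adj.reachable
    rw [SimpleGraph.deleteEdges_adj]
    refine ⟨?_, ?_⟩
    · rw [← SimpleGraph.mem_edgeSet, ← h1]
      exact e.2
    · rw [← h1]
      exact fun h => he (Subtype.ext h)

theorem reachable_of_mem_branch {d : B.Arrow} {e : B.Edge} (h : e ∈ B.branch d)
    (he : e ≠ B.src d) {z : V} (hz : z ∈ e.1) :
    (B.graph.deleteEdges {d.edge}).Reachable d.snd z := by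
  rcases h with h | ⟨z', hz', h⟩
  · exact absurd h he
  · exact h.trans (B.reachable_of_mem_edge he hz' hz)

theorem eq_of_mem_branch_of_fst_mem {d : B.Arrow} {e : B.Edge} (h : e ∈ B.branch d)
    (he : d.fst ∈ e.1) : e = B.src d := by
  by_contra hne
  exact B.not_reachable_delete d (B.reachable_of_mem_branch h hne he)

theorem mem_src_iff {d : B.Arrow} {z : V} : z ∈ (B.src d).1 ↔ z = d.fst ∨ z = d.snd :=
  Sym2.mem_iff

/-- An edge of a branch meets the edges outside the branch only in the root of the branch. -/
theorem eq_fst_of_mem_branch {d : B.Arrow} {e e' : B.Edge} (h : e ∈ B.branch d)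
    (h' : e' ∉ B.branch d) {z : V} (hz : z ∈ e.1) (hz' : z ∈ e'.1) : z = d.fst := by
  by_cases he : e = B.src d
  · subst he
    rcases B.mem_src_iff.1 hz with h1 | h1
    · exact h1
    · exact absurd (Or.inr ⟨z, hz', by rw [h1]⟩) h'
  · exact absurd (Or.inr ⟨z, hz', B.reachable_of_mem_branch h he hz⟩) h'

theorem mem_branch_of_snd_mem {d : B.Arrow} {e : B.Edge} (h : d.snd ∈ e.1) : e ∈ B.branch d :=
  Or.inr ⟨_, h, SimpleGraph.Reachable.refl _⟩

theorem eq_of_mem_branch_of_mem_branch_symm {d : B.Arrow} {e : B.Edge} (h : e ∈ B.branch d)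
    (h' : e ∈ B.branch d.symm) : e = B.src d := by
  by_contra he
  obtain ⟨d', rfl⟩ := B.exists_src_eq e
  have hz : d'.fst ∈ (B.src d').1 := B.mem_src_iff.2 (Or.inl rfl)
  have h1 := B.reachable_of_mem_branch h he hz
  have h2 := B.reachable_of_mem_branch h' (by rwa [B.src_symm]) hz
  rw [SimpleGraph.Dart.edge_symm] at h2
  exact B.not_reachable_delete d (h1.trans h2.symm)

end Combinatorics

end BrauerTree

namespace BrauerTree

/-! ### A faithful enough representation of the Brauer tree algebra -/

section Representation

variable {V : Type v} (B : BrauerTree V) (K : Type u) [Field K]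

/-- The standard basis of the Brauer tree algebra: trivial paths, paths of length `m + 1` along a
cycle, and full cycles. -/
inductive PathState
  | start (i : B.Edge)
  | mid (d : B.Arrow) (m : ℕ)
  | soc (i : B.Edge)

namespace PathState

variable {B}

/-- The end point of a basis path. -/
def target : PathState B → B.Edge
  | start i => i
  | mid d m => B.src ((B.next ^ (m + 1)) d)
  | soc i => i

variable (B)

open Classical in
/-- The path of length `n + 1` starting with `d`, or `none` if it vanishes. -/
noncomputable def ofPath (d : B.Arrow) (n : ℕ) : Option (PathState B) :=
  if n + 1 < B.cycleLength d then some (mid d n)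
  else if n + 1 = B.cycleLength d then some (soc (B.src d)) else none

open Classical in
/-- Right multiplication by an arrow. -/
noncomputable def stepArrow (a : B.Arrow) : PathState B → Option (PathState B)
  | start i => if B.src a = i then ofPath B a 0 else none
  | mid d m => if a = (B.next ^ (m + 1)) d then ofPath B d (m + 1) else none
  | soc _ => none

open Classical in
/-- Right multiplication by a trivial path. -/
noncomputable def stepVertex (j : B.Edge) (x : PathState B) : Option (PathState B) :=
  if x.target = j then some x else none

/-- Right multiplication by a path along a cycle. -/
noncomputable def walk (d : B.Arrow) : ℕ → PathState B → Option (PathState B)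
  | 0, x => some x
  | m + 1, x => (walk d m x).bind (stepArrow B ((B.next ^ m) d))

variable {B}

theorem target_of_mem_ofPath {d : B.Arrow} {n : ℕ} {x : PathState B} (h : ofPath B d n = some x) :
    x.target = B.src ((B.next ^ (n + 1)) d) := by
  unfold ofPath at h
  split_ifs at h with h1 h2
  · cases h; rfl
  · cases h
    rw [h2, B.next_pow_cycleLength]; rfl

theorem target_of_mem_stepArrow {a : B.Arrow} {x y : PathState B} (h : stepArrow B a x = some y) :
    y.target = B.tgt a := by
  cases x with
  | start i =>
    simp only [stepArrow] at h
    split_ifs at h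
    rw [target_of_mem_ofPath h, zero_add, pow_one]; rfl
  | mid d m =>
    simp only [stepArrow] at h
    split_ifs at h with h1
    rw [target_of_mem_ofPath h, h1, pow_succ']; rfl
  | soc i => simp [stepArrow] at h

theorem target_of_stepArrow_ne_none {a : B.Arrow} {x : PathState B} (h : stepArrow B a x ≠ none) :
    x.target = B.src a := by
  cases x with
  | start i =>
    simp only [stepArrow] at h
    split_ifs at h with h1
    · exact h1.symm
    · simp at h
  | mid d m =>
    simp only [stepArrow] at h
    split_ifs at h with h1
    · rw [h1]; rfl
    · simp at h
  | soc i => simp [stepArrow] at h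

theorem stepArrow_of_mem_ofPath {d a : B.Arrow} {n : ℕ} {x : PathState B}
    (h : ofPath B d n = some x) (ha : a ≠ (B.next ^ (n + 1)) d) : stepArrow B a x = none := by
  unfold ofPath at h
  split_ifs at h with h1 h2
  · cases h
    simp [stepArrow, ha]
  · cases h; rfl

theorem ofPath_bind_stepArrow (d : B.Arrow) (n : ℕ) :
    (ofPath B d n).bind (stepArrow B ((B.next ^ (n + 1)) d)) = ofPath B d (n + 1) := by
  by_cases h1 : n + 1 < B.cycleLength d
  · rw [ofPath, if_pos h1]; simp [stepArrow]
  · have : ofPath B d (n + 1) = none := by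
      rw [ofPath, if_neg (by lia), if_neg (by lia)]
    rw [this, ofPath, if_neg h1]
    split_ifs <;> rfl

theorem stepArrow_bind_of_fst_ne {a b : B.Arrow} (h : a.fst ≠ b.fst) (x : PathState B) :
    (stepArrow B a x).bind (stepArrow B b) = none := by
  rcases hx : stepArrow B a x with _ | y
  · rfl
  · change stepArrow B b y = none
    cases x with
    | start i =>
      simp only [stepArrow] at hx
      split_ifs at hx
      refine stepArrow_of_mem_ofPath hx ?_
      rintro rfl
      exact h (B.next_pow_fst _ _).symm
    | mid d m =>
      simp only [stepArrow] at hx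
      split_ifs at hx with h1
      refine stepArrow_of_mem_ofPath hx ?_
      rintro rfl
      rw [h1, B.next_pow_fst, B.next_pow_fst] at h
      exact h rfl
    | soc i => simp [stepArrow] at hx

theorem walk_start (d : B.Arrow) (n : ℕ) (i : B.Edge) [Decidable (B.src d = i)] :
    walk B d (n + 1) (start i) = if B.src d = i then ofPath B d n else none := by
  induction n with
  | zero =>
    simp only [walk, stepArrow, pow_zero, Equiv.Perm.one_apply, Option.bind_some]
    split_ifs <;> rfl
  | succ n ih =>
    rw [walk, ih]
    split_ifs
    · exact ofPath_bind_stepArrow d n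
    · rfl

theorem walk_mid (d d' : B.Arrow) (n m : ℕ) [Decidable (d = (B.next ^ (m + 1)) d')] :
    walk B d (n + 1) (mid d' m) =
      if d = (B.next ^ (m + 1)) d' then ofPath B d' (m + 1 + n) else none := by
  induction n with
  | zero =>
    simp only [walk, stepArrow, pow_zero, Equiv.Perm.one_apply, Option.bind_some]
    split_ifs <;> rfl
  | succ n ih =>
    rw [walk, ih]
    split_ifs with h
    · subst h
      rw [← Equiv.Perm.mul_apply, ← pow_add, show n + 1 + (m + 1) = m + 1 + n + 1 by lia]
      exact ofPath_bind_stepArrow d' (m + 1 + n)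
    · rfl

theorem walk_soc (d : B.Arrow) (n : ℕ) (i : B.Edge) : walk B d (n + 1) (soc i) = none := by
  induction n with
  | zero => rfl
  | succ n ih => rw [walk, ih]; rfl

theorem walk_cycleLength_eq [Finite V] (d : B.Arrow) (x : PathState B) :
    walk B d (B.cycleLength d) x = walk B d.symm (B.cycleLength d.symm) x := by
  classical
  have key : ∀ d : B.Arrow, walk B d (B.cycleLength d) x =
      match x with
      | start i => if B.src d = i then some (soc i) else none
      | _ => none := by
    intro d
    obtain ⟨n, hn⟩ := Nat.exists_eq_succ_of_ne_zero (B.cycleLength_pos d).ne'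
    rw [hn]
    cases x with
    | start i =>
      rw [Nat.succ_eq_add_one, walk_start]
      split_ifs with h
      · rw [ofPath, if_neg (by lia), if_pos hn.symm, h]
        simp
      · simp [h]
    | mid d' m =>
      rw [Nat.succ_eq_add_one, walk_mid]
      split_ifs with h
      · have : B.cycleLength d' = n + 1 := by
          rw [← Nat.succ_eq_add_one, ← hn, h, B.cycleLength_next_pow]
        rw [ofPath, if_neg (by lia), if_neg (by lia)]
      · rfl
    | soc i => exact walk_soc d n i
  rw [key, key, B.src_symm]

end PathState

open PathState

/-- The operator on functions on a type induced by a partial self-map. -/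
def partialOp {X : Type*} (p : X → Option X) : Module.End K (X → K) where
  toFun φ x := (p x).elim 0 φ
  map_add' φ ψ := by
    ext x
    rcases h : p x with _ | y <;> simp [h]
  map_smul' c φ := by
    ext x
    rcases h : p x with _ | y <;> simp [h]

theorem partialOp_mul {X : Type*} (p q : X → Option X) :
    partialOp K p * partialOp K q = partialOp K (fun x => (p x).bind q) := by
  ext φ x
  rcases h : p x with _ | y <;> simp [partialOp, h]

theorem partialOp_none {X : Type*} : partialOp K (fun _ : X => none) = 0 := rfl

/-- The representation of the free algebra on functions on the standard basis. -/
noncomputable def freeRep :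
    FreeAlgebra K (B.Edge ⊕ B.Arrow) →ₐ[K] Module.End K (PathState B → K) :=
  FreeAlgebra.lift K (Sum.elim (fun i => partialOp K (stepVertex B i))
    (fun a => partialOp K (stepArrow B a)))

@[simp] theorem freeRep_genVertex (i : B.Edge) :
    B.freeRep K (B.genVertex K i) = partialOp K (stepVertex B i) := by
  simp [freeRep, genVertex]

@[simp] theorem freeRep_genArrow (a : B.Arrow) :
    B.freeRep K (B.genArrow K a) = partialOp K (stepArrow B a) := by
  simp [freeRep, genArrow]

theorem genPath_succ (d : B.Arrow) (m : ℕ) :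
    B.genPath K d (m + 1) = B.genPath K d m * B.genArrow K ((B.next ^ m) d) := by
  simp [genPath, List.range_succ]

theorem freeRep_genPath (d : B.Arrow) (m : ℕ) :
    B.freeRep K (B.genPath K d m) = partialOp K (walk B d m) := by
  induction m with
  | zero => simp [genPath]; rfl
  | succ m ih =>
    rw [genPath_succ, map_mul, ih, freeRep_genArrow, partialOp_mul]
    rfl

theorem freeRep_rel [Finite V] ⦃x y : FreeAlgebra K (B.Edge ⊕ B.Arrow)⦄ (h : Rel B K x y) :
    B.freeRep K x = B.freeRep K y := by
  classical
  cases h with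
  | vertex_mul_self i =>
    rw [map_mul, freeRep_genVertex, partialOp_mul]
    congr 1
    ext1 x
    by_cases h : x.target = i <;> simp [stepVertex, h]
  | vertex_mul_vertex i j h =>
    rw [map_mul, freeRep_genVertex, freeRep_genVertex, partialOp_mul, map_zero, ← partialOp_none]
    congr 1
    ext1 x
    by_cases hx : x.target = i
    · simp [stepVertex, hx, h]
    · simp [stepVertex, hx]
  | sum_vertex =>
    have := Fintype.ofFinite B.Edge
    rw [finsum_eq_sum_of_fintype, map_sum, map_one]
    ext φ x
    simp only [freeRep_genVertex, LinearMap.sum_apply, Finset.sum_apply, Module.End.one_apply]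
    rw [Finset.sum_eq_single x.target]
    · simp [partialOp, stepVertex]
    · intro j _ hj
      simp [partialOp, stepVertex, hj.symm]
    · simp
  | src_mul d =>
    rw [map_mul, freeRep_genVertex, freeRep_genArrow, partialOp_mul]
    congr 1
    ext1 x
    by_cases h : x.target = B.src d
    · simp [stepVertex, h]
    · simp only [stepVertex, h, if_false, Option.bind_none]
      by_contra hne
      exact h (target_of_stepArrow_ne_none fun h0 => hne h0.symm)
  | mul_tgt d =>
    rw [map_mul, freeRep_genVertex, freeRep_genArrow, partialOp_mul]
    congr 1
    ext1 x
    rcases hx : stepArrow B d x with _ | y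
    · rfl
    · simp [stepVertex, target_of_mem_stepArrow hx]
  | arrow_mul_arrow d d' h =>
    rw [map_mul, freeRep_genArrow, freeRep_genArrow, partialOp_mul, map_zero, ← partialOp_none]
    congr 1
    ext1 x
    exact stepArrow_bind_of_fst_ne h x
  | cycle_eq d =>
    rw [freeRep_genPath, freeRep_genPath]
    congr 1
    ext1 x
    exact walk_cycleLength_eq d x

/-- The representation of the Brauer tree algebra on functions on its standard basis. -/
noncomputable def rep [Finite V] : B.Alg K →ₐ[K] Module.End K (PathState B → K) :=
  RingQuot.liftAlgHom K ⟨B.freeRep K, B.freeRep_rel K⟩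

/-- The quotient map from the free algebra. -/
noncomputable def toAlg : FreeAlgebra K (B.Edge ⊕ B.Arrow) →ₐ[K] B.Alg K :=
  RingQuot.mkAlgHom K (Rel B K)

theorem rep_toAlg [Finite V] (x : FreeAlgebra K (B.Edge ⊕ B.Arrow)) :
    B.rep K (B.toAlg K x) = B.freeRep K x :=
  RingQuot.liftAlgHom_mkAlgHom_apply K _ _ _

end Representation

end BrauerTree

namespace BrauerTree

/-! ### Paths in the Brauer tree algebra -/

section Paths

variable {V : Type v} (B : BrauerTree V) (K : Type u) [Field K]

/-- The arrow `d` as an element of the algebra. -/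
noncomputable def arr (d : B.Arrow) : B.Alg K := B.toAlg K (B.genArrow K d)

/-- The path of length `m` along a cycle that starts with `d`. -/
noncomputable def pathElt (d : B.Arrow) (m : ℕ) : B.Alg K := B.toAlg K (B.genPath K d m)

variable {K}

theorem toAlg_rel {x y : FreeAlgebra K (B.Edge ⊕ B.Arrow)} (h : Rel B K x y) :
    B.toAlg K x = B.toAlg K y :=
  RingQuot.mkAlgHom_rel K h

theorem idem_eq (i : B.Edge) : B.idem K i = B.toAlg K (B.genVertex K i) := rfl

theorem idem_mul_self (i : B.Edge) : B.idem K i * B.idem K i = B.idem K i := by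
  rw [idem_eq, ← map_mul]; exact B.toAlg_rel (.vertex_mul_self i)

theorem idem_mul_of_ne {i j : B.Edge} (h : i ≠ j) : B.idem K i * B.idem K j = 0 := by
  rw [idem_eq, idem_eq, ← map_mul, B.toAlg_rel (.vertex_mul_vertex i j h), map_zero]

theorem sum_idem [Fintype B.Edge] : ∑ i : B.Edge, B.idem K i = 1 := by
  have := B.toAlg_rel (K := K) .sum_vertex
  rw [finsum_eq_sum_of_fintype, map_sum, map_one] at this
  exact this

theorem idem_src_mul_arr (d : B.Arrow) : B.idem K (B.src d) * B.arr K d = B.arr K d := by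
  rw [idem_eq, arr, ← map_mul]; exact B.toAlg_rel (.src_mul d)

theorem arr_mul_idem_tgt (d : B.Arrow) : B.arr K d * B.idem K (B.src (B.next d)) = B.arr K d := by
  rw [idem_eq, arr, ← map_mul]; exact B.toAlg_rel (.mul_tgt d)

theorem idem_mul_arr_of_ne {d : B.Arrow} {i : B.Edge} (h : i ≠ B.src d) :
    B.idem K i * B.arr K d = 0 := by
  rw [← idem_src_mul_arr, ← mul_assoc, B.idem_mul_of_ne h, zero_mul]

theorem arr_mul_arr_of_ne {d d' : B.Arrow} (h : d' ≠ B.next d) : B.arr K d * B.arr K d' = 0 := by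
  by_cases hf : d.fst = d'.fst
  · have hs : B.src (B.next d) ≠ B.src d' := fun hs =>
      h (B.eq_of_src_eq_of_fst_eq hs ((B.next_fst d).trans hf)).symm
    rw [← arr_mul_idem_tgt, mul_assoc, B.idem_mul_arr_of_ne hs, mul_zero]
  · rw [arr, arr, ← map_mul, B.toAlg_rel (.arrow_mul_arrow d d' hf), map_zero]

@[simp] theorem pathElt_zero (d : B.Arrow) : B.pathElt K d 0 = 1 := by
  simp [pathElt, genPath]

theorem pathElt_succ (d : B.Arrow) (m : ℕ) :
    B.pathElt K d (m + 1) = B.pathElt K d m * B.arr K ((B.next ^ m) d) := by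
  rw [pathElt, genPath_succ, map_mul]; rfl

theorem pathElt_one (d : B.Arrow) : B.pathElt K d 1 = B.arr K d := by
  simp [pathElt_succ]

theorem pathElt_add (d : B.Arrow) (m n : ℕ) :
    B.pathElt K d (m + n) = B.pathElt K d m * B.pathElt K ((B.next ^ m) d) n := by
  induction n with
  | zero => simp
  | succ n ih =>
    rw [← add_assoc, pathElt_succ, ih, pathElt_succ, mul_assoc, ← Equiv.Perm.mul_apply,
      ← pow_add, add_comm n m]

theorem idem_mul_pathElt (d : B.Arrow) {m : ℕ} (hm : 0 < m) :
    B.idem K (B.src d) * B.pathElt K d m = B.pathElt K d m := by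
  obtain ⟨n, rfl⟩ := Nat.exists_eq_add_of_le hm
  rw [pathElt_add, ← mul_assoc, Nat.succ_eq_add_one, zero_add, pathElt_one, idem_src_mul_arr]

theorem pathElt_mul_idem (d : B.Arrow) {m : ℕ} (hm : 0 < m) :
    B.pathElt K d m * B.idem K (B.src ((B.next ^ m) d)) = B.pathElt K d m := by
  obtain ⟨n, rfl⟩ := Nat.exists_eq_succ_of_ne_zero hm.ne'
  rw [Nat.succ_eq_add_one, pathElt_succ, mul_assoc, pow_succ', Equiv.Perm.mul_apply,
    arr_mul_idem_tgt]

theorem pathElt_mul_arr_of_ne {d d' : B.Arrow} {m : ℕ} (hm : 0 < m) (h : d' ≠ (B.next ^ m) d) :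
    B.pathElt K d m * B.arr K d' = 0 := by
  obtain ⟨n, rfl⟩ := Nat.exists_eq_succ_of_ne_zero hm.ne'
  rw [Nat.succ_eq_add_one, pow_succ', Equiv.Perm.mul_apply] at h
  rw [Nat.succ_eq_add_one, pathElt_succ, mul_assoc, B.arr_mul_arr_of_ne h, mul_zero]

theorem pathElt_mul_pathElt_of_ne {d d' : B.Arrow} {m n : ℕ} (hm : 0 < m) (hn : 0 < n)
    (h : d' ≠ (B.next ^ m) d) : B.pathElt K d m * B.pathElt K d' n = 0 := by
  obtain ⟨n, rfl⟩ := Nat.exists_eq_add_of_le hn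
  rw [pathElt_add, ← mul_assoc, Nat.succ_eq_add_one, zero_add, pathElt_one, B.pathElt_mul_arr_of_ne hm h, zero_mul]

theorem pathElt_mul_pathElt_of_fst_ne {d d' : B.Arrow} {m n : ℕ} (hm : 0 < m) (hn : 0 < n)
    (h : d.fst ≠ d'.fst) : B.pathElt K d m * B.pathElt K d' n = 0 :=
  B.pathElt_mul_pathElt_of_ne hm hn fun h' => h (by rw [h', B.next_pow_fst])

theorem pathElt_cycleLength_symm (d : B.Arrow) :
    B.pathElt K d (B.cycleLength d) = B.pathElt K d.symm (B.cycleLength d.symm) :=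
  B.toAlg_rel (.cycle_eq d)

section Finite

variable [Finite V]

theorem pathElt_cycleLength_mul_arr (d d' : B.Arrow) :
    B.pathElt K d (B.cycleLength d) * B.arr K d' = 0 := by
  by_cases h : d' = d
  · subst h
    rw [pathElt_cycleLength_symm]
    refine B.pathElt_mul_arr_of_ne (B.cycleLength_pos _) ?_
    rw [B.next_pow_cycleLength]
    exact fun h => B.fst_symm_ne d' (congrArg (fun d : B.Arrow => d.fst) h).symm
  · refine B.pathElt_mul_arr_of_ne (B.cycleLength_pos _) ?_
    rwa [B.next_pow_cycleLength]

theorem pathElt_eq_zero {d : B.Arrow} {m : ℕ} (h : B.cycleLength d < m) :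
    B.pathElt K d m = 0 := by
  obtain ⟨n, rfl⟩ := Nat.exists_eq_add_of_lt h
  rw [add_assoc, add_comm n 1, ← add_assoc, pathElt_add, pathElt_succ,
    pathElt_cycleLength_mul_arr, zero_mul]

theorem pathElt_cycleLength_mul_pathElt (d d' : B.Arrow) {m : ℕ} (hm : 0 < m) :
    B.pathElt K d (B.cycleLength d) * B.pathElt K d' m = 0 := by
  obtain ⟨n, rfl⟩ := Nat.exists_eq_add_of_le hm
  rw [pathElt_add, ← mul_assoc, Nat.succ_eq_add_one, zero_add, pathElt_one, pathElt_cycleLength_mul_arr, zero_mul]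

theorem pathElt_mul_pathElt_cycleLength (d d' : B.Arrow) {m : ℕ} (hm : 0 < m) :
    B.pathElt K d' m * B.pathElt K d (B.cycleLength d) = 0 := by
  by_cases h : d = (B.next ^ m) d'
  · have h2 : d.symm ≠ (B.next ^ m) d' := by
      rw [← h]
      exact fun h => B.fst_symm_ne d (congrArg (fun d : B.Arrow => d.fst) h)
    rw [pathElt_cycleLength_symm, B.pathElt_mul_pathElt_of_ne hm (B.cycleLength_pos _) h2]
  · exact B.pathElt_mul_pathElt_of_ne hm (B.cycleLength_pos _) h

theorem pathElt_cycleLength_ne_zero (d : B.Arrow) : B.pathElt K d (B.cycleLength d) ≠ 0 := by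
  classical
  intro h
  have h1 : B.rep K (B.pathElt K d (B.cycleLength d)) = 0 := by rw [h, map_zero]
  rw [pathElt, rep_toAlg, freeRep_genPath] at h1
  have h2 := congrFun (LinearMap.congr_fun h1 fun _ => 1) (PathState.start (B.src d))
  obtain ⟨n, hn⟩ := Nat.exists_eq_succ_of_ne_zero (B.cycleLength_pos d).ne'
  rw [hn, Nat.succ_eq_add_one] at h2
  simp only [partialOp, LinearMap.coe_mk, AddHom.coe_mk, PathState.walk_start, if_true] at h2
  rw [PathState.ofPath, if_neg (by lia), if_pos (by lia)] at h2
  simp at h2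

theorem pathElt_ne_zero {d : B.Arrow} {m : ℕ} (h : m ≤ B.cycleLength d) :
    B.pathElt K d m ≠ 0 := by
  intro h0
  obtain ⟨n, hn⟩ := Nat.exists_eq_add_of_le h
  apply B.pathElt_cycleLength_ne_zero (K := K) d
  rw [hn, pathElt_add, h0, zero_mul]

theorem idem_ne_zero (i : B.Edge) : B.idem K i ≠ 0 := by
  obtain ⟨d, rfl⟩ := B.exists_src_eq i
  intro h
  apply B.pathElt_cycleLength_ne_zero (K := K) d
  rw [← B.idem_mul_pathElt d (B.cycleLength_pos d), h, zero_mul]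

variable (K) in
/-- The span of the idempotents and of the nonzero paths. -/
noncomputable def pathSpan : Submodule K (B.Alg K) :=
  Submodule.span K (Set.range (B.idem K) ∪
    {y | ∃ (d : B.Arrow) (m : ℕ), 0 < m ∧ m ≤ B.cycleLength d ∧ y = B.pathElt K d m})

theorem pathElt_mem_pathSpan (d : B.Arrow) {m : ℕ} (hm : 0 < m) :
    B.pathElt K d m ∈ B.pathSpan K := by
  by_cases h : m ≤ B.cycleLength d
  · exact Submodule.subset_span (Or.inr ⟨d, m, hm, h, rfl⟩)
  · rw [B.pathElt_eq_zero (by lia)]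
    exact zero_mem _

theorem mul_mem_pathSpan (x : FreeAlgebra K (B.Edge ⊕ B.Arrow)) :
    ∀ w ∈ B.pathSpan K, w * B.toAlg K x ∈ B.pathSpan K := by
  induction x using FreeAlgebra.induction with
  | grade0 r =>
    intro w hw
    rw [AlgHom.commutes, ← Algebra.commutes, ← Algebra.smul_def]
    exact Submodule.smul_mem _ _ hw
  | grade1 x =>
    intro w hw
    induction hw using Submodule.span_induction with
    | mem w hw =>
      rcases x with j | a
      · change w * B.idem K j ∈ _
        rcases hw with ⟨i, rfl⟩ | ⟨d, m, hm, -, rfl⟩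
        · by_cases h : i = j
          · subst h
            rw [idem_mul_self]
            exact Submodule.subset_span (Or.inl ⟨i, rfl⟩)
          · rw [B.idem_mul_of_ne h]
            exact zero_mem _
        · by_cases h : B.src ((B.next ^ m) d) = j
          · subst h
            rw [B.pathElt_mul_idem d hm]
            exact B.pathElt_mem_pathSpan d hm
          · rw [← B.pathElt_mul_idem d hm, mul_assoc, B.idem_mul_of_ne h, mul_zero]
            exact zero_mem _
      · change w * B.arr K a ∈ _
        rcases hw with ⟨i, rfl⟩ | ⟨d, m, hm, -, rfl⟩
        · by_cases h : i = B.src a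
          · subst h
            rw [idem_src_mul_arr, ← pathElt_one]
            exact B.pathElt_mem_pathSpan a one_pos
          · rw [B.idem_mul_arr_of_ne h]
            exact zero_mem _
        · by_cases h : a = (B.next ^ m) d
          · subst h
            rw [← pathElt_succ]
            exact B.pathElt_mem_pathSpan d m.succ_pos
          · rw [B.pathElt_mul_arr_of_ne hm h]
            exact zero_mem _
    | zero => rw [zero_mul]; exact zero_mem _
    | add x y _ _ hx hy => rw [add_mul]; exact add_mem hx hy
    | smul c x _ hx => rw [smul_mul_assoc]; exact Submodule.smul_mem _ _ hx
  | mul x y hx hy =>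
    intro w hw
    rw [map_mul, ← mul_assoc]
    exact hy _ (hx _ hw)
  | add x y hx hy =>
    intro w hw
    rw [map_add, mul_add]
    exact add_mem (hx _ hw) (hy _ hw)

theorem mem_pathSpan (x : B.Alg K) : x ∈ B.pathSpan K := by
  have := Fintype.ofFinite B.Edge
  obtain ⟨y, rfl⟩ := RingQuot.mkAlgHom_surjective K (Rel B K) x
  have h1 : (1 : B.Alg K) ∈ B.pathSpan K := by
    rw [← sum_idem]
    exact sum_mem fun i _ => Submodule.subset_span (Or.inl ⟨i, rfl⟩)
  have := B.mul_mem_pathSpan y 1 h1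
  rw [one_mul] at this
  exact this

/-- The Peirce component `e_a A e_b` is spanned by the paths from `a` to `b`. -/
theorem idem_mul_mul_idem_mem (a b : B.Edge) (x : B.Alg K) :
    B.idem K a * x * B.idem K b ∈ Submodule.span K
      ({y | a = b ∧ y = B.idem K a} ∪ {y | ∃ (d : B.Arrow) (m : ℕ), 0 < m ∧ m ≤ B.cycleLength d ∧
        B.src d = a ∧ B.src ((B.next ^ m) d) = b ∧ y = B.pathElt K d m}) := by
  have hx := B.mem_pathSpan x
  unfold pathSpan at hx
  induction hx using Submodule.span_induction with
  | mem w hw =>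
    rcases hw with ⟨i, rfl⟩ | ⟨d, m, hm, hm', rfl⟩
    · by_cases h : a = i
      · subst h
        rw [idem_mul_self]
        by_cases h : a = b
        · subst h
          rw [idem_mul_self]
          exact Submodule.subset_span (Or.inl ⟨rfl, rfl⟩)
        · rw [B.idem_mul_of_ne h]
          exact zero_mem _
      · rw [B.idem_mul_of_ne h, zero_mul]
        exact zero_mem _
    · by_cases h : B.src d = a
      · by_cases h' : B.src ((B.next ^ m) d) = b
        · rw [← h, B.idem_mul_pathElt d hm, ← h', B.pathElt_mul_idem d hm]
          exact Submodule.subset_span (Or.inr ⟨d, m, hm, hm', rfl, rfl, rfl⟩)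
        · rw [mul_assoc, ← B.pathElt_mul_idem d hm, mul_assoc, B.idem_mul_of_ne h', mul_zero,
            mul_zero]
          exact zero_mem _
      · rw [← B.idem_mul_pathElt d hm, ← mul_assoc, B.idem_mul_of_ne (Ne.symm h), zero_mul,
          zero_mul]
        exact zero_mem _
  | zero => rw [mul_zero, zero_mul]; exact zero_mem _
  | add x y _ _ hx hy => rw [mul_add, add_mul]; exact add_mem hx hy
  | smul c x _ hx =>
    rw [mul_smul_comm, smul_mul_assoc]; exact Submodule.smul_mem _ _ hx

end Finite

end Paths

end BrauerTree

namespace BrauerTree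

/-! ### The distance on a cycle and the Peirce components -/

section Peirce

variable {V : Type v} (B : BrauerTree V) {K : Type u} [Field K]

/-- The number of steps from `d` to `d'` along their common cycle. -/
noncomputable def dist (d d' : B.Arrow) : ℕ := sInf {m | (B.next ^ m) d = d'}

theorem dist_le {d d' : B.Arrow} {m : ℕ} (h : (B.next ^ m) d = d') : B.dist d d' ≤ m :=
  Nat.sInf_le h

section Finite

variable [Finite V]

theorem next_pow_dist {d d' : B.Arrow} (h : d.fst = d'.fst) : (B.next ^ B.dist d d') d = d' := by
  obtain ⟨m, -, hm⟩ := B.exists_next_pow_eq h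
  exact Nat.sInf_mem (s := {m | (B.next ^ m) d = d'}) ⟨m, hm⟩

theorem dist_lt {d d' : B.Arrow} (h : d.fst = d'.fst) : B.dist d d' < B.cycleLength d := by
  obtain ⟨m, hm, hm'⟩ := B.exists_next_pow_eq h
  exact (B.dist_le hm').trans_lt hm

theorem dist_eq {d d' : B.Arrow} {m : ℕ} (hm : m < B.cycleLength d) (h : (B.next ^ m) d = d') :
    B.dist d d' = m := by
  have hf : d.fst = d'.fst := by rw [← h, B.next_pow_fst]
  exact B.eq_of_next_pow_eq d (B.dist_lt hf) hm ((B.next_pow_dist hf).trans h.symm)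

theorem dist_pos {d d' : B.Arrow} (h : d.fst = d'.fst) (hne : d ≠ d') : 0 < B.dist d d' := by
  rw [Nat.pos_iff_ne_zero]
  intro h0
  have := B.next_pow_dist h
  rw [h0] at this
  exact hne this

theorem dist_add {d d' d'' : B.Arrow} (h : d.fst = d'.fst) (h' : d'.fst = d''.fst) :
    B.dist d d' + B.dist d' d'' = B.dist d d'' ∨
      B.dist d d' + B.dist d' d'' = B.dist d d'' + B.cycleLength d := by
  have h1 := B.dist_lt h
  have h2 := B.dist_lt h'
  rw [← B.cycleLength_eq h] at h2
  have h3 : (B.next ^ (B.dist d d' + B.dist d' d'')) d = d'' := by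
    rw [add_comm, pow_add, Equiv.Perm.mul_apply, B.next_pow_dist h, B.next_pow_dist h']
  by_cases hlt : B.dist d d' + B.dist d' d'' < B.cycleLength d
  · exact Or.inl (B.dist_eq hlt h3).symm
  · right
    have h4 : (B.next ^ (B.dist d d' + B.dist d' d'' - B.cycleLength d)) d = d'' := by
      rw [← B.next_pow_mod, ← Nat.mod_eq_sub_mod (by lia), B.next_pow_mod, h3]
    rw [B.dist_eq (by lia) h4]
    lia

theorem dist_add_comm {d d' : B.Arrow} (h : d.fst = d'.fst) (hne : d ≠ d') :
    B.dist d d' + B.dist d' d = B.cycleLength d := by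
  have h0 : B.dist d d = 0 := B.dist_eq (B.cycleLength_pos d) rfl
  have := B.dist_pos h hne
  have := B.dist_add h h.symm
  lia

variable (K) in
/-- The path from `d` to `d'` along their common cycle. -/
noncomputable def arc (d d' : B.Arrow) : B.Alg K := B.pathElt K d (B.dist d d')

theorem arc_ne_zero {d d' : B.Arrow} (h : d.fst = d'.fst) : B.arc K d d' ≠ 0 :=
  B.pathElt_ne_zero (B.dist_lt h).le

theorem arc_mul_arc {d d' d'' : B.Arrow} (h : d.fst = d'.fst) :
    B.arc K d d' * B.arc K d' d'' = B.pathElt K d (B.dist d d' + B.dist d' d'') := by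
  rw [arc, arc, pathElt_add, B.next_pow_dist h]

/-- `arc d d''` factors over `d'` if `d'` is at most as far from `d` as `d''`. -/
theorem arc_mul_arc_of_dist_le {d d' d'' : B.Arrow} (h : d.fst = d'.fst) (h' : d'.fst = d''.fst)
    (hle : B.dist d d' ≤ B.dist d d'') : B.arc K d d' * B.arc K d' d'' = B.arc K d d'' := by
  rw [arc_mul_arc B h, arc]
  have := B.dist_lt h'
  rw [← B.cycleLength_eq h] at this
  have := B.dist_add h h'
  congr 1
  lia

/-- `arc d d''` factors over `d'` if `d'` is at most as far from `d''` as `d`. -/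
theorem arc_mul_arc_of_dist_le' {d d' d'' : B.Arrow} (h : d.fst = d'.fst) (h' : d'.fst = d''.fst)
    (hle : B.dist d' d'' ≤ B.dist d d'') : B.arc K d d' * B.arc K d' d'' = B.arc K d d'' := by
  rw [arc_mul_arc B h, arc]
  have := B.dist_lt h
  have := B.dist_add h h'
  congr 1
  lia

theorem arc_mul_arc_self {d d' : B.Arrow} (h : d.fst = d'.fst) (hne : d ≠ d') :
    B.arc K d d' * B.arc K d' d = B.pathElt K d (B.cycleLength d) := by
  rw [arc_mul_arc B h, B.dist_add_comm h hne]

theorem arc_mul_arc_eq_zero {d d' d'' : B.Arrow} (h : d.fst = d'.fst)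
    (hlt : B.cycleLength d < B.dist d d' + B.dist d' d'') :
    B.arc K d d' * B.arc K d' d'' = 0 := by
  rw [arc_mul_arc B h, B.pathElt_eq_zero hlt]

theorem arc_mul_arc_of_fst_ne {a b c d : B.Arrow} (hab : a.fst = b.fst) (hcd : c.fst = d.fst)
    (h1 : a ≠ b) (h2 : c ≠ d) (h : a.fst ≠ c.fst) : B.arc K a b * B.arc K c d = 0 :=
  B.pathElt_mul_pathElt_of_fst_ne (B.dist_pos hab h1) (B.dist_pos hcd h2) h

end Finite

variable (K) in
/-- `x` is an element of `e_a A e_b`. -/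
def IsPeirce (a b : B.Edge) (x : B.Alg K) : Prop := B.idem K a * x = x ∧ x * B.idem K b = x

variable {B}

theorem isPeirce_zero (a b : B.Edge) : B.IsPeirce K a b 0 := ⟨mul_zero _, zero_mul _⟩

theorem isPeirce_idem (a : B.Edge) : B.IsPeirce K a a (B.idem K a) :=
  ⟨B.idem_mul_self a, B.idem_mul_self a⟩

theorem IsPeirce.add {a b : B.Edge} {x y : B.Alg K} (hx : B.IsPeirce K a b x)
    (hy : B.IsPeirce K a b y) : B.IsPeirce K a b (x + y) :=
  ⟨by rw [mul_add, hx.1, hy.1], by rw [add_mul, hx.2, hy.2]⟩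

theorem IsPeirce.neg {a b : B.Edge} {x : B.Alg K} (hx : B.IsPeirce K a b x) :
    B.IsPeirce K a b (-x) :=
  ⟨by rw [mul_neg, hx.1], by rw [neg_mul, hx.2]⟩

theorem IsPeirce.sub {a b : B.Edge} {x y : B.Alg K} (hx : B.IsPeirce K a b x)
    (hy : B.IsPeirce K a b y) : B.IsPeirce K a b (x - y) := by
  rw [sub_eq_add_neg]; exact hx.add hy.neg

theorem IsPeirce.smul {a b : B.Edge} {x : B.Alg K} (hx : B.IsPeirce K a b x) (c : K) :
    B.IsPeirce K a b (c • x) :=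
  ⟨by rw [mul_smul_comm, hx.1], by rw [smul_mul_assoc, hx.2]⟩

theorem IsPeirce.mul {a b c : B.Edge} {x y : B.Alg K} (hx : B.IsPeirce K a b x)
    (hy : B.IsPeirce K b c y) : B.IsPeirce K a c (x * y) :=
  ⟨by rw [← mul_assoc, hx.1], by rw [mul_assoc, hy.2]⟩

section Finite

variable [Finite V]

theorem isPeirce_arc {d d' : B.Arrow} (h : d.fst = d'.fst) (hne : d ≠ d') :
    B.IsPeirce K (B.src d) (B.src d') (B.arc K d d') := by
  have h1 := B.dist_pos h hne
  refine ⟨B.idem_mul_pathElt d h1, ?_⟩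
  have := B.pathElt_mul_idem (K := K) d h1
  rwa [B.next_pow_dist h] at this

theorem isPeirce_pathElt_cycleLength (d : B.Arrow) :
    B.IsPeirce K (B.src d) (B.src d) (B.pathElt K d (B.cycleLength d)) := by
  refine ⟨B.idem_mul_pathElt d (B.cycleLength_pos d), ?_⟩
  have := B.pathElt_mul_idem (K := K) d (B.cycleLength_pos d)
  rwa [B.next_pow_cycleLength] at this

theorem IsPeirce.mem_span {a b : B.Edge} {x : B.Alg K} (hx : B.IsPeirce K a b x) :
    x ∈ Submodule.span K
      ({y | a = b ∧ y = B.idem K a} ∪ {y | ∃ (d : B.Arrow) (m : ℕ), 0 < m ∧ m ≤ B.cycleLength d ∧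
        B.src d = a ∧ B.src ((B.next ^ m) d) = b ∧ y = B.pathElt K d m}) := by
  have := B.idem_mul_mul_idem_mem a b x
  rwa [hx.1, hx.2] at this

theorem IsPeirce.exists_eq_smul_arc {d d' : B.Arrow} {x : B.Alg K}
    (hx : B.IsPeirce K (B.src d) (B.src d') x) (hf : d.fst = d'.fst) (hne : d ≠ d') :
    ∃ c : K, x = c • B.arc K d d' := by
  have hs : B.src d ≠ B.src d' := fun h => hne (B.eq_of_src_eq_of_fst_eq h hf)
  have h1 : x ∈ Submodule.span K {B.arc K d d'} := by
    refine Submodule.span_mono ?_ hx.mem_span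
    rintro y (⟨h, -⟩ | ⟨e, m, -, hm, h1, h2, rfl⟩)
    · exact absurd h hs
    · obtain ⟨rfl, h3⟩ := B.fst_eq_of_src_eq h1 h2 (by rwa [h1, h2]) (B.next_pow_fst e m).symm hf
      have hm' : m ≠ B.cycleLength e := by
        rintro rfl
        rw [B.next_pow_cycleLength] at h3
        exact hne h3
      rw [Set.mem_singleton_iff, arc, B.dist_eq (by lia) h3]
  obtain ⟨c, hc⟩ := Submodule.mem_span_singleton.1 h1
  exact ⟨c, hc.symm⟩

theorem IsPeirce.eq_zero_of_forall_fst_ne {a b : B.Edge} {x : B.Alg K} (hx : B.IsPeirce K a b x)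
    (hab : a ≠ b) (h : ∀ d d' : B.Arrow, B.src d = a → B.src d' = b → d.fst ≠ d'.fst) :
    x = 0 := by
  have h1 := hx.mem_span
  rw [← Submodule.mem_bot K, ← Submodule.span_empty]
  refine Submodule.span_mono ?_ h1
  rintro y (⟨h, -⟩ | ⟨d, m, -, hm, h1, h2, rfl⟩)
  · exact hab h
  · exact h d _ h1 h2 (B.next_pow_fst d m).symm

theorem IsPeirce.exists_of_ne_zero {a b : B.Edge} {x : B.Alg K} (hx : B.IsPeirce K a b x)
    (hab : a ≠ b) (h0 : x ≠ 0) :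
    ∃ (d d' : B.Arrow) (c : K), B.src d = a ∧ B.src d' = b ∧ d.fst = d'.fst ∧ d ≠ d' ∧ c ≠ 0 ∧
      x = c • B.arc K d d' := by
  by_contra hcon
  refine h0 (hx.eq_zero_of_forall_fst_ne hab fun d d' h1 h2 h3 => hcon ?_)
  subst h1 h2
  have hne : d ≠ d' := fun h => hab (congrArg B.src h)
  obtain ⟨c, hc⟩ := hx.exists_eq_smul_arc h3 hne
  refine ⟨d, d', c, rfl, rfl, h3, hne, ?_, hc⟩
  rintro rfl
  exact h0 (by rw [hc, zero_smul])

theorem IsPeirce.exists_eq_add {d : B.Arrow} {x : B.Alg K}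
    (hx : B.IsPeirce K (B.src d) (B.src d) x) :
    ∃ c c' : K, x = c • B.idem K (B.src d) + c' • B.pathElt K d (B.cycleLength d) := by
  have h1 : x ∈ Submodule.span K {B.idem K (B.src d), B.pathElt K d (B.cycleLength d)} := by
    refine Submodule.span_mono ?_ hx.mem_span
    rintro y (⟨-, rfl⟩ | ⟨e, m, hm0, hm, h1, h2, rfl⟩)
    · exact Or.inl rfl
    · right
      rw [Set.mem_singleton_iff]
      have h3 : (B.next ^ m) e = e :=
        B.eq_of_src_eq_of_fst_eq (h2.trans h1.symm) (B.next_pow_fst e m)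
      have h4 : m = B.cycleLength e := by
        by_contra hne
        have := B.eq_of_next_pow_eq e (m := m) (n := 0) (by lia) (B.cycleLength_pos e) h3
        lia
      rw [h4]
      rcases B.src_eq_iff.1 h1 with rfl | rfl
      · rfl
      · rw [← B.pathElt_cycleLength_symm]
  obtain ⟨c, c', h⟩ := Submodule.mem_span_pair.1 h1
  exact ⟨c, c', h.symm⟩

end Finite

end Peirce

end BrauerTree

/-! ### Idempotent endomorphisms of presentations -/

section Idempotent

variable {A : Type u} [Ring A]

theorem eq_zero_or_eq_id_of_indecomposable {M : ModuleCat.{u} A} (hM : Indecomposable M)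
    (q : M →ₗ[A] M) (hq : q ∘ₗ q = q) : q = 0 ∨ q = LinearMap.id := by
  have hq' : IsIdempotentElem q := hq
  have hc := LinearMap.IsIdempotentElem.isCompl hq'
  let e : M ≅ ModuleCat.of A (LinearMap.range q) ⊞ ModuleCat.of A (LinearMap.ker q) :=
    (Submodule.prodEquivOfIsCompl _ _ hc).symm.toModuleIso ≪≫
      (ModuleCat.biprodIsoProd (ModuleCat.of A (LinearMap.range q))
        (ModuleCat.of A (LinearMap.ker q))).symm
  rcases hM.2 _ _ e with h | h
  · left
    have := ModuleCat.subsingleton_of_isZero h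
    ext x
    exact congrArg Subtype.val
      (Subsingleton.elim (α := LinearMap.range q) ⟨q x, ⟨x, rfl⟩⟩ 0)
  · right
    have := ModuleCat.subsingleton_of_isZero h
    ext x
    have hx : x - q x ∈ LinearMap.ker q := by
      rw [LinearMap.mem_ker, map_sub, sub_eq_zero]
      exact (LinearMap.congr_fun hq x).symm
    have := congrArg Subtype.val
      (Subsingleton.elim (α := LinearMap.ker q) ⟨x - q x, hx⟩ 0)
    exact (sub_eq_zero.1 this).symm

theorem IsSuperfluous.eq_zero_of_range_le {M : Type*} [AddCommGroup M] [Module A M]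
    {N : Submodule A M} (hN : IsSuperfluous N) {ε : M →ₗ[A] M} (hε : ε ∘ₗ ε = ε)
    (h : LinearMap.range ε ≤ N) : ε = 0 := by
  have h1 : LinearMap.range (LinearMap.id - ε) = ⊤ := by
    apply hN
    rw [eq_top_iff]
    intro x _
    rw [Submodule.mem_sup]
    exact ⟨ε x, h ⟨x, rfl⟩, x - ε x, ⟨x, rfl⟩, by abel⟩
  ext x
  obtain ⟨y, rfl⟩ : x ∈ LinearMap.range (LinearMap.id - ε) := h1 ▸ Submodule.mem_top
  have := LinearMap.congr_fun hε y
  simp only [LinearMap.comp_apply] at this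
  simp [this]

theorem IsPresentation.idempotent_trivial {T : CochainComplex (ModuleCat.{u} A) ℤ}
    (hp : IsPresentation T) (ε₀ : T.X 0 →ₗ[A] T.X 0) (ε₁ : T.X 1 →ₗ[A] T.X 1)
    (h₀ : ε₀ ∘ₗ ε₀ = ε₀) (h₁ : ε₁ ∘ₗ ε₁ = ε₁)
    (h : ε₁ ∘ₗ (T.d 0 1).hom = (T.d 0 1).hom ∘ₗ ε₀) :
    (ε₀ = 0 ∧ ε₁ = 0) ∨ (ε₀ = LinearMap.id ∧ ε₁ = LinearMap.id) := by
  obtain ⟨M, p, hM, -, -, hsurj, hker, hs₁, hs₀⟩ := hp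
  have key : ∀ (ε₀ : T.X 0 →ₗ[A] T.X 0) (ε₁ : T.X 1 →ₗ[A] T.X 1), ε₀ ∘ₗ ε₀ = ε₀ →
      ε₁ ∘ₗ ε₁ = ε₁ → ε₁ ∘ₗ (T.d 0 1).hom = (T.d 0 1).hom ∘ₗ ε₀ → p ∘ₗ ε₁ = 0 →
      ε₀ = 0 ∧ ε₁ = 0 := by
    intro ε₀ ε₁ h₀ h₁ h h0
    have e1 : ε₁ = 0 := by
      refine hs₁.eq_zero_of_range_le h₁ ?_
      rintro _ ⟨x, rfl⟩
      exact LinearMap.congr_fun h0 x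
    refine ⟨hs₀.eq_zero_of_range_le h₀ ?_, e1⟩
    rintro _ ⟨x, rfl⟩
    have := LinearMap.congr_fun h x
    rw [e1] at this
    exact this.symm
  have hle : LinearMap.ker p ≤ LinearMap.ker (p ∘ₗ ε₁) := by
    rw [hker]
    rintro _ ⟨x, rfl⟩
    rw [LinearMap.mem_ker, LinearMap.comp_apply]
    have h2 := LinearMap.congr_fun h x
    simp only [LinearMap.comp_apply] at h2
    rw [h2, ← LinearMap.mem_ker, hker]
    exact ⟨_, rfl⟩
  let e := p.quotKerEquivOfSurjective hsurj
  let q : M →ₗ[A] M := ((LinearMap.ker p).liftQ (p ∘ₗ ε₁) hle) ∘ₗ e.symm.toLinearMap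
  have hq : ∀ x, q (p x) = p (ε₁ x) := by
    intro x
    have : e.symm (p x) = Submodule.Quotient.mk x := by
      rw [LinearEquiv.symm_apply_eq]; rfl
    simp only [q, LinearMap.comp_apply, LinearEquiv.coe_coe, this]
    rfl
  have hqq : q ∘ₗ q = q := by
    ext y
    obtain ⟨x, rfl⟩ := hsurj y
    simp only [LinearMap.comp_apply, hq]
    exact congrArg p (LinearMap.congr_fun h₁ x)
  rcases eq_zero_or_eq_id_of_indecomposable hM q hqq with h0 | h0
  · left
    refine key ε₀ ε₁ h₀ h₁ h ?_
    ext x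
    rw [LinearMap.comp_apply, ← hq, h0]
    rfl
  · right
    have := key (LinearMap.id - ε₀) (LinearMap.id - ε₁)
      (by ext x; have := LinearMap.congr_fun h₀ x; simp at this; simp [this])
      (by ext x; have := LinearMap.congr_fun h₁ x; simp at this; simp [this])
      (by rw [LinearMap.sub_comp, LinearMap.comp_sub, h]; rfl)
      (by
        ext x
        have : p (ε₁ x) = p x := by rw [← hq, h0]; rfl
        simp [this])
    exact ⟨(sub_eq_zero.1 this.1).symm, (sub_eq_zero.1 this.2).symm⟩

end Idempotent

/-! ### Matrices over the Peirce components -/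

section Matrices

variable {V : Type v} {B : BrauerTree V} {K : Type u} [Field K]

namespace BrauerTree

theorem mem_proj_iff {i : B.Edge} {x : B.Alg K} : x ∈ B.proj K i ↔ x * B.idem K i = x := by
  rw [proj, Submodule.mem_span_singleton]
  constructor
  · rintro ⟨a, rfl⟩
    rw [smul_eq_mul, mul_assoc, B.idem_mul_self]
  · intro h
    exact ⟨x, h⟩

/-- The generator of `A e_i`. -/
noncomputable def projGen (B : BrauerTree V) (K : Type u) [Field K] (i : B.Edge) : B.proj K i :=
  ⟨B.idem K i, mem_proj_iff.2 (B.idem_mul_self i)⟩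

theorem eq_smul_projGen {i : B.Edge} (y : B.proj K i) : y = (y : B.Alg K) • B.projGen K i :=
  Subtype.ext (mem_proj_iff.1 y.2).symm

/-- A matrix with entries in the Peirce components `e_i A e_j`. -/
def IsPeirceMatrix {I J : Finset B.Edge} (G : I → J → B.Alg K) : Prop :=
  ∀ i j, B.IsPeirce K i.1 j.1 (G i j)

/-- The map `⨁ A e_i → ⨁ A e_j` given by right multiplication with a matrix. -/
noncomputable def matMap {I J : Finset B.Edge} (G : I → J → B.Alg K) (hG : IsPeirceMatrix G) :
    (∀ i : I, B.proj K i.1) →ₗ[B.Alg K] (∀ j : J, B.proj K j.1) where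
  toFun y j := ⟨∑ i, (y i : B.Alg K) * G i j, mem_proj_iff.2 (by
    rw [Finset.sum_mul]
    exact Finset.sum_congr rfl fun i _ => by rw [mul_assoc, (hG i j).2])⟩
  map_add' y z := by
    ext j
    simp [add_mul, Finset.sum_add_distrib]
  map_smul' a y := by
    ext j
    simp [Finset.mul_sum, mul_assoc]

theorem matMap_apply_coe {I J : Finset B.Edge} (G : I → J → B.Alg K) (hG : IsPeirceMatrix G)
    (y : ∀ i : I, B.proj K i.1) (j : J) :
    (matMap G hG y j : B.Alg K) = ∑ i, (y i : B.Alg K) * G i j := rfl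

open Classical in
theorem matMap_single {I J : Finset B.Edge} (G : I → J → B.Alg K) (hG : IsPeirceMatrix G)
    (i : I) (j : J) :
    (matMap G hG (Pi.single i (B.projGen K i.1)) j : B.Alg K) = G i j := by
  rw [matMap_apply_coe, Finset.sum_eq_single i]
  · rw [Pi.single_eq_same]
    exact (hG i j).1
  · intro i' _ h
    rw [Pi.single_eq_of_ne h]
    simp
  · simp

open Classical in
/-- The matrix of a linear map. -/
noncomputable def matrixOf {I J : Finset B.Edge}
    (f : (∀ i : I, B.proj K i.1) →ₗ[B.Alg K] (∀ j : J, B.proj K j.1)) (i : I) (j : J) : B.Alg K :=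
  f (Pi.single i (B.projGen K i.1)) j

theorem isPeirceMatrix_matrixOf {I J : Finset B.Edge}
    (f : (∀ i : I, B.proj K i.1) →ₗ[B.Alg K] (∀ j : J, B.proj K j.1)) :
    IsPeirceMatrix (matrixOf f) := by
  classical
  intro i j
  refine ⟨?_, mem_proj_iff.1 (Subtype.property _)⟩
  have h1 : B.idem K i.1 • (Pi.single i (B.projGen K i.1) : ∀ i : I, B.proj K i.1) =
      Pi.single i (B.projGen K i.1) := by
    rw [← Pi.single_smul]
    congr 1
    exact Subtype.ext (B.idem_mul_self i.1)
  have h2 := congrArg (fun z => ((f z) j : B.Alg K)) h1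
  simp only [map_smul, Pi.smul_apply, Submodule.coe_smul, smul_eq_mul] at h2
  unfold matrixOf
  convert h2

theorem matMap_matrixOf {I J : Finset B.Edge}
    (f : (∀ i : I, B.proj K i.1) →ₗ[B.Alg K] (∀ j : J, B.proj K j.1)) :
    matMap (matrixOf f) (isPeirceMatrix_matrixOf f) = f := by
  classical
  refine LinearMap.pi_ext fun i y => ?_
  have hy : (Pi.single i y : ∀ i : I, B.proj K i.1) =
      (y : B.Alg K) • Pi.single i (B.projGen K i.1) := by
    rw [← Pi.single_smul, ← eq_smul_projGen]
  rw [hy, map_smul, map_smul]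
  congr 1
  ext j
  rw [matMap_single]
  unfold matrixOf
  congr!

theorem matMap_inj {I J : Finset B.Edge} {G H : I → J → B.Alg K} (hG : IsPeirceMatrix G)
    (hH : IsPeirceMatrix H) : matMap G hG = matMap H hH ↔ G = H := by
  classical
  constructor
  · intro h
    ext i j
    rw [← matMap_single G hG, ← matMap_single H hH, h]
  · rintro rfl
    rfl

theorem isPeirceMatrix_zero (I J : Finset B.Edge) :
    IsPeirceMatrix (0 : I → J → B.Alg K) := fun i j => isPeirce_zero i.1 j.1

theorem matMap_zero (I J : Finset B.Edge) :
    matMap (0 : I → J → B.Alg K) (isPeirceMatrix_zero I J) = 0 := by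
  ext y j
  simp [matMap_apply_coe]

theorem IsPeirceMatrix.mul {I J L : Finset B.Edge} {G : I → J → B.Alg K} {H : J → L → B.Alg K}
    (hG : IsPeirceMatrix G) (hH : IsPeirceMatrix H) :
    IsPeirceMatrix (fun i l => ∑ j, G i j * H j l) := by
  intro i l
  constructor
  · rw [Finset.mul_sum]
    exact Finset.sum_congr rfl fun j _ => ((hG i j).mul (hH j l)).1
  · rw [Finset.sum_mul]
    exact Finset.sum_congr rfl fun j _ => ((hG i j).mul (hH j l)).2

theorem matMap_comp {I J L : Finset B.Edge} {G : I → J → B.Alg K} {H : J → L → B.Alg K}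
    (hG : IsPeirceMatrix G) (hH : IsPeirceMatrix H) :
    matMap H hH ∘ₗ matMap G hG = matMap (fun i l => ∑ j, G i j * H j l) (hG.mul hH) := by
  ext y l
  simp only [LinearMap.comp_apply, matMap_apply_coe, Finset.sum_mul, Finset.mul_sum]
  rw [Finset.sum_comm]
  simp only [mul_assoc]

open Classical in
/-- The identity matrix. -/
noncomputable def idMatrix (B : BrauerTree V) (K : Type u) [Field K] (I : Finset B.Edge) (i i' : I) :
    B.Alg K :=
  if i = i' then B.idem K i.1 else 0

theorem isPeirceMatrix_idMatrix (I : Finset B.Edge) : IsPeirceMatrix (B.idMatrix K I) := by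
  intro i i'
  unfold idMatrix
  split_ifs with h
  · subst h
    exact isPeirce_idem _
  · exact isPeirce_zero _ _

theorem matMap_idMatrix (I : Finset B.Edge) :
    matMap (B.idMatrix K I) (isPeirceMatrix_idMatrix I) = LinearMap.id := by
  ext y i
  rw [matMap_apply_coe, Finset.sum_eq_single i]
  · simp only [idMatrix, if_true]
    exact mem_proj_iff.1 (y i).2
  · intro i' _ h
    simp [idMatrix, h]
  · simp

end BrauerTree

namespace TermDecomposition

open BrauerTree

variable {T : CochainComplex (ModuleCat.{max u v} (B.Alg K)) ℤ} (D : TermDecomposition B K T)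

/-- The differential as a map between the direct sums. -/
noncomputable def diff : (∀ i : D.I, B.proj K i.1) →ₗ[B.Alg K] (∀ j : D.J, B.proj K j.1) :=
  D.equiv₁.toLinearMap ∘ₗ (T.d 0 1).hom ∘ₗ D.equiv₀.symm.toLinearMap

/-- The matrix of the differential. -/
noncomputable def entry : D.I → D.J → B.Alg K := matrixOf D.diff

theorem isPeirceMatrix_entry : IsPeirceMatrix D.entry := isPeirceMatrix_matrixOf _

theorem matMap_entry : matMap D.entry D.isPeirceMatrix_entry = D.diff := matMap_matrixOf _

theorem component_apply (i : D.I) (j : D.J) (y : B.proj K i.1) :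
    (D.component i j y : B.Alg K) = y * D.entry i j := by
  classical
  have h1 : D.component i j y = D.diff (Pi.single i y) j := by
    unfold component diff
    simp only [LinearMap.comp_apply, LinearMap.proj_apply, LinearMap.coe_single]
  rw [h1, ← matMap_entry, matMap_apply_coe, Finset.sum_eq_single i]
  · rw [Pi.single_eq_same]
  · intro i' _ h
    rw [Pi.single_eq_of_ne h]
    simp
  · simp

theorem component_ne_zero_iff (i : D.I) (j : D.J) : D.component i j ≠ 0 ↔ D.entry i j ≠ 0 := by
  rw [not_iff_not]
  constructor
  · intro h
    have := D.component_apply i j (B.projGen K i.1)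
    rw [h] at this
    rw [← (D.isPeirceMatrix_entry i j).1]
    exact this.symm
  · intro h
    ext y
    rw [component_apply, h, mul_zero]
    rfl

end TermDecomposition

end Matrices

section Transfer

variable {V : Type v} {B : BrauerTree V} {K : Type u} [Field K]

open BrauerTree

variable {S T : CochainComplex (ModuleCat.{max u v} (B.Alg K)) ℤ}

variable (B K) in
/-- The properties of the matrix of the differential that determine the shape of the diagram. -/
structure IsStringMatrix {I J : Finset B.Edge} (F : I → J → B.Alg K) : Prop where
  peirce : IsPeirceMatrix F
  disjoint : ∀ x ∈ I, x ∉ J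
  nonempty_left : I.Nonempty
  nonempty_right : J.Nonempty
  idem_trivial : ∀ (E₀ : I → I → B.Alg K) (E₁ : J → J → B.Alg K), IsPeirceMatrix E₀ →
    IsPeirceMatrix E₁ → (∀ i i'', ∑ i', E₀ i i' * E₀ i' i'' = E₀ i i'') →
    (∀ j j'', ∑ j', E₁ j j' * E₁ j' j'' = E₁ j j'') →
    (∀ i j, ∑ i', E₀ i i' * F i' j = ∑ j', F i j' * E₁ j' j) →
    (E₀ = 0 ∧ E₁ = 0) ∨ (E₀ = B.idMatrix K I ∧ E₁ = B.idMatrix K J)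

theorem entry_idem_trivial (hp : IsPresentation T) (D : TermDecomposition B K T)
    (E₀ : D.I → D.I → B.Alg K) (E₁ : D.J → D.J → B.Alg K) (hE₀ : IsPeirceMatrix E₀)
    (hE₁ : IsPeirceMatrix E₁) (h₀ : ∀ i i'', ∑ i', E₀ i i' * E₀ i' i'' = E₀ i i'')
    (h₁ : ∀ j j'', ∑ j', E₁ j j' * E₁ j' j'' = E₁ j j'')
    (h : ∀ i j, ∑ i', E₀ i i' * D.entry i' j = ∑ j', D.entry i j' * E₁ j' j) :
    (E₀ = 0 ∧ E₁ = 0) ∨ (E₀ = B.idMatrix K D.I ∧ E₁ = B.idMatrix K D.J) := by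
  have h₀' : matMap E₀ hE₀ ∘ₗ matMap E₀ hE₀ = matMap E₀ hE₀ := by
    rw [matMap_comp, matMap_inj]
    ext i i'
    exact h₀ i i'
  have h₁' : matMap E₁ hE₁ ∘ₗ matMap E₁ hE₁ = matMap E₁ hE₁ := by
    rw [matMap_comp, matMap_inj]
    ext i i'
    exact h₁ i i'
  have h' : D.diff ∘ₗ matMap E₀ hE₀ = matMap E₁ hE₁ ∘ₗ D.diff := by
    rw [← D.matMap_entry, matMap_comp, matMap_comp, matMap_inj]
    ext i j
    exact h i j
  have key := hp.idempotent_trivial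
    (D.equiv₀.symm.toLinearMap ∘ₗ matMap E₀ hE₀ ∘ₗ D.equiv₀.toLinearMap)
    (D.equiv₁.symm.toLinearMap ∘ₗ matMap E₁ hE₁ ∘ₗ D.equiv₁.toLinearMap)
    (by
      ext1 x
      have := LinearMap.congr_fun h₀' (D.equiv₀ x)
      simp only [LinearMap.comp_apply] at this
      simp [this])
    (by
      ext1 x
      have := LinearMap.congr_fun h₁' (D.equiv₁ x)
      simp only [LinearMap.comp_apply] at this
      simp [this])
    (by
      ext1 x
      have := LinearMap.congr_fun h' (D.equiv₀ x)
      simp only [LinearMap.comp_apply, TermDecomposition.diff, LinearEquiv.coe_coe,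
        LinearEquiv.symm_apply_apply] at this
      simp only [LinearMap.comp_apply, LinearEquiv.coe_coe]
      rw [← this, LinearEquiv.symm_apply_apply])
  have tr₀ : ∀ f : T.X 0 →ₗ[B.Alg K] T.X 0,
      D.equiv₀.symm.toLinearMap ∘ₗ matMap E₀ hE₀ ∘ₗ D.equiv₀.toLinearMap = f →
      matMap E₀ hE₀ = D.equiv₀.toLinearMap ∘ₗ f ∘ₗ D.equiv₀.symm.toLinearMap := by
    rintro _ rfl
    ext1 y
    simp
  have tr₁ : ∀ f : T.X 1 →ₗ[B.Alg K] T.X 1,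
      D.equiv₁.symm.toLinearMap ∘ₗ matMap E₁ hE₁ ∘ₗ D.equiv₁.toLinearMap = f →
      matMap E₁ hE₁ = D.equiv₁.toLinearMap ∘ₗ f ∘ₗ D.equiv₁.symm.toLinearMap := by
    rintro _ rfl
    ext1 y
    simp
  rcases key with ⟨k₀, k₁⟩ | ⟨k₀, k₁⟩
  · left
    rw [← matMap_inj hE₀ (isPeirceMatrix_zero _ _), ← matMap_inj hE₁ (isPeirceMatrix_zero _ _),
      matMap_zero, matMap_zero, tr₀ _ k₀, tr₁ _ k₁]
    simp
  · right
    rw [← matMap_inj hE₀ (isPeirceMatrix_idMatrix _), ← matMap_inj hE₁ (isPeirceMatrix_idMatrix _),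
      matMap_idMatrix, matMap_idMatrix, tr₀ _ k₀, tr₁ _ k₁]
    constructor <;> ext1 y <;> simp

section Radical

variable [Finite V]

/-- The entries of the differential lie in the radical. -/
theorem exists_entry_eq_smul (hp : IsPresentation T) (D : TermDecomposition B K T) (d : B.Arrow)
    (hi : B.src d ∈ D.I) (hj : B.src d ∈ D.J) :
    ∃ c : K, D.entry ⟨B.src d, hi⟩ ⟨B.src d, hj⟩ = c • B.pathElt K d (B.cycleLength d) := by
  classical
  obtain ⟨c, c', hc⟩ := (D.isPeirceMatrix_entry ⟨B.src d, hi⟩ ⟨B.src d, hj⟩).exists_eq_add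
  refine ⟨c', ?_⟩
  by_cases h0 : c = 0
  · rw [hc, h0, zero_smul, zero_add]
  exfalso
  obtain ⟨M, p, -, -, -, hsurj, hker, hs, -⟩ := hp
  set s := B.pathElt K d (B.cycleLength d) with hs_def
  have hss : s * s = 0 := B.pathElt_cycleLength_mul_pathElt d d (B.cycleLength_pos d)
  have hes : B.idem K (B.src d) * s = s := (isPeirce_pathElt_cycleLength d).1
  have hse : s * B.idem K (B.src d) = s := (isPeirce_pathElt_cycleLength d).2
  let j₀ : D.J := ⟨B.src d, hj⟩
  let L : Submodule (B.Alg K) (T.X 1) :=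
    LinearMap.ker (LinearMap.proj j₀ ∘ₗ D.equiv₁.toLinearMap)
  have htop : LinearMap.ker p ⊔ L = ⊤ := by
    rw [eq_top_iff]
    intro x _
    let b : B.Alg K := c⁻¹ • B.idem K (B.src d) - (c⁻¹ * c⁻¹ * c') • s
    let y : B.Alg K := (D.equiv₁ x j₀ : B.Alg K)
    have hb : b * D.entry ⟨B.src d, hi⟩ j₀ = B.idem K (B.src d) := by
      have : D.entry ⟨B.src d, hi⟩ j₀ = _ := hc
      rw [this]
      simp only [b, sub_mul, mul_add, smul_mul_assoc, mul_smul_comm, hes, hse, hss,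
        B.idem_mul_self, smul_zero, sub_zero]
      rw [smul_sub, smul_smul, smul_smul, smul_smul, mul_inv_cancel₀ h0, one_smul,
        show c * (c⁻¹ * c⁻¹ * c') = c' * c⁻¹ by field_simp]
      abel
    let z : ∀ i : D.I, B.proj K i.1 := (y * b) • Pi.single ⟨B.src d, hi⟩ (B.projGen K (B.src d))
    have hz : (D.diff z j₀ : B.Alg K) = y := by
      rw [← D.matMap_entry, map_smul, Pi.smul_apply, Submodule.coe_smul, matMap_single,
        smul_eq_mul, mul_assoc, hb]
      exact mem_proj_iff.1 (D.equiv₁ x j₀).2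
    rw [Submodule.mem_sup]
    refine ⟨D.equiv₁.symm (D.diff z), ?_, x - D.equiv₁.symm (D.diff z), ?_, by abel⟩
    · rw [hker]
      exact ⟨D.equiv₀.symm z, by simp [TermDecomposition.diff]⟩
    · rw [LinearMap.mem_ker]
      simp only [LinearMap.comp_apply, map_sub, LinearEquiv.coe_coe, LinearEquiv.apply_symm_apply,
        LinearMap.proj_apply]
      rw [sub_eq_zero]
      exact Subtype.ext hz.symm
  have hL := hs L htop
  have hx : D.equiv₁.symm (Pi.single j₀ (B.projGen K (B.src d))) ∈ L := hL ▸ Submodule.mem_top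
  rw [LinearMap.mem_ker] at hx
  simp only [LinearMap.comp_apply, LinearEquiv.coe_coe, LinearEquiv.apply_symm_apply,
    LinearMap.proj_apply, Pi.single_eq_same] at hx
  exact B.idem_ne_zero (K := K) (B.src d) (congrArg Subtype.val hx)

theorem pathElt_cycleLength_mul_entry (hp : IsPresentation T) (D : TermDecomposition B K T)
    (d : B.Arrow) (i : D.I) (j : D.J) :
    B.pathElt K d (B.cycleLength d) * D.entry i j = 0 := by
  by_cases hij : i.1 = j.1
  · obtain ⟨i, hi⟩ := i
    obtain ⟨j, hj⟩ := j
    obtain rfl : i = j := hij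
    obtain ⟨d', rfl⟩ := B.exists_src_eq i
    obtain ⟨c, hc⟩ := exists_entry_eq_smul hp D d' hi hj
    rw [hc, mul_smul_comm, B.pathElt_cycleLength_mul_pathElt _ _ (B.cycleLength_pos _), smul_zero]
  · by_cases h0 : D.entry i j = 0
    · rw [h0, mul_zero]
    · obtain ⟨a, b, c, -, -, hf, hne, -, hx⟩ := (D.isPeirceMatrix_entry i j).exists_of_ne_zero hij h0
      rw [hx, mul_smul_comm, arc, B.pathElt_cycleLength_mul_pathElt _ _ (B.dist_pos hf hne),
        smul_zero]

theorem entry_mul_pathElt_cycleLength (hp : IsPresentation T) (D : TermDecomposition B K T)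
    (d : B.Arrow) (i : D.I) (j : D.J) :
    D.entry i j * B.pathElt K d (B.cycleLength d) = 0 := by
  by_cases hij : i.1 = j.1
  · obtain ⟨i, hi⟩ := i
    obtain ⟨j, hj⟩ := j
    obtain rfl : i = j := hij
    obtain ⟨d', rfl⟩ := B.exists_src_eq i
    obtain ⟨c, hc⟩ := exists_entry_eq_smul hp D d' hi hj
    rw [hc, smul_mul_assoc, B.pathElt_cycleLength_mul_pathElt _ _ (B.cycleLength_pos _), smul_zero]
  · by_cases h0 : D.entry i j = 0
    · rw [h0, zero_mul]
    · obtain ⟨a, b, c, -, -, hf, hne, -, hx⟩ := (D.isPeirceMatrix_entry i j).exists_of_ne_zero hij h0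
      rw [hx, smul_mul_assoc, arc, B.pathElt_mul_pathElt_cycleLength _ _ (B.dist_pos hf hne),
        smul_zero]

end Radical

variable [HasDerivedCategory.{w} (ModuleCat.{max u v} (B.Alg K))]

theorem homVanishes_iff_matrix (hS : IsIndecTwoTermPartialTilting S)
    (hT : IsIndecTwoTermPartialTilting T) (DS : TermDecomposition B K S)
    (DT : TermDecomposition B K T) :
    HomVanishes S T (-1) ↔ ∀ G : DS.J → DT.I → B.Alg K, IsPeirceMatrix G →
      (∀ i i', ∑ j, DS.entry i j * G j i' = 0) → (∀ j j', ∑ i, G j i * DT.entry i j' = 0) →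
      G = 0 := by
  rw [homVanishes_neg_one_iff hS hT]
  constructor
  · intro H G hG h1 h2
    have h1' : matMap G hG ∘ₗ DS.diff = 0 := by
      rw [← DS.matMap_entry, matMap_comp, ← matMap_zero, matMap_inj]
      ext i i'
      exact h1 i i'
    have h2' : DT.diff ∘ₗ matMap G hG = 0 := by
      rw [← DT.matMap_entry, matMap_comp, ← matMap_zero, matMap_inj]
      ext j j'
      exact h2 j j'
    have key := H (DT.equiv₀.symm.toLinearMap ∘ₗ matMap G hG ∘ₗ DS.equiv₁.toLinearMap)
      (by
        ext x
        have := LinearMap.congr_fun h1' (DS.equiv₀ x)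
        simpa [TermDecomposition.diff] using this)
      (by
        ext x
        have := LinearMap.congr_fun h2' (DS.equiv₁ x)
        simpa [TermDecomposition.diff] using this)
    rw [← matMap_inj hG (isPeirceMatrix_zero _ _), matMap_zero]
    ext1 y
    have := LinearMap.congr_fun key (DS.equiv₁.symm y)
    simpa using this
  · intro H g h1 h2
    let g' := DT.equiv₀.toLinearMap ∘ₗ g ∘ₗ DS.equiv₁.symm.toLinearMap
    have h1' : g' ∘ₗ DS.diff = 0 := by
      ext1 y
      have := LinearMap.congr_fun h1 (DS.equiv₀.symm y)
      simpa [g', TermDecomposition.diff] using this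
    have h2' : DT.diff ∘ₗ g' = 0 := by
      ext1 y
      have := LinearMap.congr_fun h2 (DS.equiv₁.symm y)
      simpa [g', TermDecomposition.diff] using this
    rw [← matMap_matrixOf g', ← DS.matMap_entry, matMap_comp, ← matMap_zero, matMap_inj] at h1'
    rw [← matMap_matrixOf g', ← DT.matMap_entry, matMap_comp, ← matMap_zero, matMap_inj] at h2'
    have key := H (matrixOf g') (isPeirceMatrix_matrixOf g')
      (fun i i' => congrFun (congrFun h1' i) i') (fun j j' => congrFun (congrFun h2' j) j')
    rw [← matMap_inj (isPeirceMatrix_matrixOf g') (isPeirceMatrix_zero _ _), matMap_zero,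
      matMap_matrixOf] at key
    ext1 x
    have := LinearMap.congr_fun key (DS.equiv₁ x)
    simpa [g'] using this

variable [Finite V]

/-- A common vertex of the sinks of `S` and the sources of `T` gives a nonzero morphism. -/
theorem not_homVanishes_of_mem (hS : IsIndecTwoTermPartialTilting S)
    (hT : IsIndecTwoTermPartialTilting T) (hpS : IsPresentation S) (hpT : IsPresentation T)
    (DS : TermDecomposition B K S) (DT : TermDecomposition B K T) {k : B.Edge}
    (hj : k ∈ DS.J) (hi : k ∈ DT.I) : ¬ HomVanishes S T (-1) := by
  classical
  rw [homVanishes_iff_matrix hS hT DS DT]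
  intro H
  obtain ⟨d, rfl⟩ := B.exists_src_eq k
  let G : DS.J → DT.I → B.Alg K := fun j i =>
    if j.1 = B.src d ∧ i.1 = B.src d then B.pathElt K d (B.cycleLength d) else 0
  have hG := H G
    (by
      intro j i
      simp only [G]
      split_ifs with h
      · rw [h.1, h.2]; exact isPeirce_pathElt_cycleLength d
      · exact isPeirce_zero _ _)
    (by
      intro i i'
      refine Finset.sum_eq_zero fun j _ => ?_
      simp only [G]
      split_ifs
      · exact entry_mul_pathElt_cycleLength hpS DS d i j
      · exact mul_zero _)
    (by
      intro j j'
      refine Finset.sum_eq_zero fun i _ => ?_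
      simp only [G]
      split_ifs
      · exact pathElt_cycleLength_mul_entry hpT DT d i j'
      · exact zero_mul _)
  have := congrFun (congrFun hG ⟨B.src d, hj⟩) ⟨B.src d, hi⟩
  simp only [G, and_self, if_true] at this
  exact B.pathElt_cycleLength_ne_zero d this

theorem isStringMatrix_entry (hT : IsIndecTwoTermPartialTilting T) (hp : IsPresentation T)
    (D : TermDecomposition B K T) : IsStringMatrix B K D.entry where
  peirce := D.isPeirceMatrix_entry
  disjoint x hi hj := not_homVanishes_of_mem hT hT hp hp D D hj hi (hT.homVanishes _ (by norm_num))
  nonempty_left := by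
    rw [Finset.nonempty_iff_ne_empty]
    intro h0
    obtain ⟨M, p, -, hM, -, hsurj, hker, -, -⟩ := hp
    have : IsEmpty D.I := by rw [h0]; infer_instance
    have hs : Subsingleton (T.X 0) := D.equiv₀.toEquiv.subsingleton
    have hk : LinearMap.ker p = ⊥ := by
      rw [hker, eq_bot_iff]
      rintro _ ⟨x, rfl⟩
      rw [Subsingleton.elim x 0, map_zero]
      exact zero_mem _
    have := hT.projective 1
    exact hM (Module.Projective.of_equiv
      (LinearEquiv.ofBijective p ⟨LinearMap.ker_eq_bot.1 hk, hsurj⟩))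
  nonempty_right := by
    rw [Finset.nonempty_iff_ne_empty]
    intro h0
    obtain ⟨M, p, hM, -, -, hsurj, -, -, -⟩ := hp
    have : IsEmpty D.J := by rw [h0]; infer_instance
    have hs : Subsingleton (T.X 1) := D.equiv₁.toEquiv.subsingleton
    have : Subsingleton M := hsurj.subsingleton
    exact hM.1 (ModuleCat.isZero_of_subsingleton M)
  idem_trivial := entry_idem_trivial hp D

end Transfer

/-! ### The local shape of the diagram -/

section StringMatrix

open BrauerTree

variable {V : Type v} {B : BrauerTree V} {K : Type u} [Field K]

namespace BrauerTree

open Classical in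
/-- The diagonal idempotent matrix of a set of edges. -/
noncomputable def diagMatrix (B : BrauerTree V) (K : Type u) [Field K] (S : Set B.Edge)
    (L : Finset B.Edge) (i i' : L) : B.Alg K :=
  if i = i' ∧ i.1 ∈ S then B.idem K i.1 else 0

theorem isPeirceMatrix_diagMatrix (S : Set B.Edge) (L : Finset B.Edge) :
    IsPeirceMatrix (B.diagMatrix K S L) := by
  intro i i'
  unfold diagMatrix
  split_ifs with h
  · rw [← h.1]; exact isPeirce_idem _
  · exact isPeirce_zero _ _

open Classical in
theorem sum_diagMatrix_mul (S : Set B.Edge) {L M : Finset B.Edge} {X : L → M → B.Alg K}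
    (hX : IsPeirceMatrix X) (i : L) (j : M) :
    ∑ i', B.diagMatrix K S L i i' * X i' j = if i.1 ∈ S then X i j else 0 := by
  rw [Finset.sum_eq_single i]
  · by_cases h : i.1 ∈ S <;> simp [diagMatrix, h, (hX i j).1]
  · intro i' _ h
    simp [diagMatrix, h.symm]
  · simp

open Classical in
theorem sum_mul_diagMatrix (S : Set B.Edge) {L M : Finset B.Edge} {X : L → M → B.Alg K}
    (hX : IsPeirceMatrix X) (i : L) (j : M) :
    ∑ j', X i j' * B.diagMatrix K S M j' j = if j.1 ∈ S then X i j else 0 := by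
  rw [Finset.sum_eq_single j]
  · by_cases h : j.1 ∈ S <;> simp [diagMatrix, h, (hX i j).2]
  · intro j' _ h
    simp [diagMatrix, h]
  · simp

end BrauerTree

variable {I J : Finset B.Edge} {F : I → J → B.Alg K}

namespace IsStringMatrix

/-- The differential has a nonzero component from the edge of `p` to the edge of `q`. -/
def Linked (F : I → J → B.Alg K) (p q : B.Arrow) : Prop :=
  ∃ (hp : B.src p ∈ I) (hq : B.src q ∈ J), F ⟨B.src p, hp⟩ ⟨B.src q, hq⟩ ≠ 0

theorem linked_of_ne_zero {i : I} {j : J} {p q : B.Arrow} (hp : B.src p = i.1)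
    (hq : B.src q = j.1) (h : F i j ≠ 0) : Linked F p q :=
  ⟨hp ▸ i.2, hq ▸ j.2, by simpa [hp, hq] using h⟩

theorem ne_of_linked (hF : IsStringMatrix B K F) {p q : B.Arrow} (h : Linked F p q) : p ≠ q := by
  rintro rfl
  exact hF.disjoint _ h.1 h.2.1

variable [Finite V]

open Classical in
/-- A set of edges that becomes closed under the differential after a unipotent change of basis
contains all marked vertices or none. -/
theorem all_or_none_of_perturbation (hF : IsStringMatrix B K F) (S : Set B.Edge)
    (n₀ : I → I → B.Alg K) (n₁ : J → J → B.Alg K) (hn₀ : IsPeirceMatrix n₀)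
    (hn₁ : IsPeirceMatrix n₁) (h₀ : ∀ i i', n₀ i i' ≠ 0 → i.1 ∉ S ∧ i'.1 ∈ S)
    (h₁ : ∀ j j', n₁ j j' ≠ 0 → j.1 ∈ S ∧ j'.1 ∉ S)
    (h : ∀ i j, (if i.1 ∈ S then F i j else 0) - (if j.1 ∈ S then F i j else 0) =
      ∑ i', n₀ i i' * F i' j + ∑ j', F i j' * n₁ j' j) :
    ((∀ x ∈ I, x ∉ S) ∧ ∀ x ∈ J, x ∉ S) ∨ ((∀ x ∈ I, x ∈ S) ∧ ∀ x ∈ J, x ∈ S) := by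
  have d₀ : ∀ i, n₀ i i = 0 := fun i => by
    by_contra hne
    exact (h₀ i i hne).1 (h₀ i i hne).2
  have d₁ : ∀ j, n₁ j j = 0 := fun j => by
    by_contra hne
    exact (h₁ j j hne).2 (h₁ j j hne).1
  have key := hF.idem_trivial (fun i i' => B.diagMatrix K S I i i' - n₀ i i')
    (fun j j' => B.diagMatrix K S J j j' + n₁ j j')
    (fun i i' => (isPeirceMatrix_diagMatrix S I i i').sub (hn₀ i i'))
    (fun j j' => (isPeirceMatrix_diagMatrix S J j j').add (hn₁ j j'))
    (by
      intro i i''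
      simp only [sub_mul, mul_sub, Finset.sum_sub_distrib]
      rw [sum_diagMatrix_mul S (isPeirceMatrix_diagMatrix S I), sum_diagMatrix_mul S hn₀,
        sum_mul_diagMatrix S hn₀]
      have e1 : (if i.1 ∈ S then B.diagMatrix K S I i i'' else 0) = B.diagMatrix K S I i i'' := by
        by_cases hi : i.1 ∈ S <;> simp [diagMatrix, hi]
      have e2 : (if i.1 ∈ S then n₀ i i'' else 0) = 0 := by
        split_ifs with hi
        · by_contra hne
          exact (h₀ _ _ hne).1 hi
        · rfl
      have e3 : (if i''.1 ∈ S then n₀ i i'' else 0) = n₀ i i'' := by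
        split_ifs with hi
        · rfl
        · by_contra hne
          exact hi (h₀ _ _ fun h0 => hne h0.symm).2
      have e4 : ∑ i', n₀ i i' * n₀ i' i'' = 0 := by
        refine Finset.sum_eq_zero fun i' _ => ?_
        by_cases hz : n₀ i i' = 0
        · rw [hz, zero_mul]
        · have : n₀ i' i'' = 0 := by
            by_contra hne
            exact (h₀ _ _ hne).1 (h₀ _ _ hz).2
          rw [this, mul_zero]
      rw [e1, e2, e3, e4]
      abel)
    (by
      intro j j''
      simp only [add_mul, mul_add, Finset.sum_add_distrib]
      rw [sum_diagMatrix_mul S (isPeirceMatrix_diagMatrix S J), sum_diagMatrix_mul S hn₁,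
        sum_mul_diagMatrix S hn₁]
      have e1 : (if j.1 ∈ S then B.diagMatrix K S J j j'' else 0) = B.diagMatrix K S J j j'' := by
        by_cases hi : j.1 ∈ S <;> simp [diagMatrix, hi]
      have e2 : (if j.1 ∈ S then n₁ j j'' else 0) = n₁ j j'' := by
        split_ifs with hi
        · rfl
        · by_contra hne
          exact hi (h₁ _ _ fun h0 => hne h0.symm).1
      have e3 : (if j''.1 ∈ S then n₁ j j'' else 0) = 0 := by
        split_ifs with hi
        · by_contra hne
          exact (h₁ _ _ hne).2 hi
        · rfl
      have e4 : ∑ j', n₁ j j' * n₁ j' j'' = 0 := by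
        refine Finset.sum_eq_zero fun j' _ => ?_
        by_cases hz : n₁ j j' = 0
        · rw [hz, zero_mul]
        · have : n₁ j' j'' = 0 := by
            by_contra hne
            exact (h₁ _ _ hz).2 (h₁ _ _ hne).1
          rw [this, mul_zero]
      rw [e1, e2, e3, e4]
      abel)
    (by
      intro i j
      simp only [sub_mul, mul_add, Finset.sum_sub_distrib, Finset.sum_add_distrib]
      rw [sum_diagMatrix_mul S hF.peirce, sum_mul_diagMatrix S hF.peirce]
      have := h i j
      rw [sub_eq_iff_eq_add] at this
      rw [this]
      abel)
  rcases key with ⟨k₀, k₁⟩ | ⟨k₀, k₁⟩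
  · left
    constructor
    · intro x hx hS
      have := congrFun (congrFun k₀ ⟨x, hx⟩) ⟨x, hx⟩
      simp only [d₀, diagMatrix, hS, and_self, if_true, sub_zero] at this
      exact B.idem_ne_zero x this
    · intro x hx hS
      have := congrFun (congrFun k₁ ⟨x, hx⟩) ⟨x, hx⟩
      simp only [d₁, diagMatrix, hS, and_self, if_true, add_zero] at this
      exact B.idem_ne_zero x this
  · right
    constructor
    · intro x hx
      by_contra hS
      have := congrFun (congrFun k₀ ⟨x, hx⟩) ⟨x, hx⟩
      simp only [d₀, diagMatrix, hS, and_false, if_false, sub_zero, idMatrix, if_true] at this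
      exact B.idem_ne_zero x this.symm
    · intro x hx
      by_contra hS
      have := congrFun (congrFun k₁ ⟨x, hx⟩) ⟨x, hx⟩
      simp only [d₁, diagMatrix, hS, and_false, if_false, add_zero, idMatrix, if_true] at this
      exact B.idem_ne_zero x this.symm

/-- The diagram is connected. -/
theorem all_or_none (hF : IsStringMatrix B K F) (S : Set B.Edge)
    (h : ∀ i j, F i j ≠ 0 → (i.1 ∈ S ↔ j.1 ∈ S)) :
    ((∀ x ∈ I, x ∉ S) ∧ ∀ x ∈ J, x ∉ S) ∨ ((∀ x ∈ I, x ∈ S) ∧ ∀ x ∈ J, x ∈ S) := by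
  classical
  refine hF.all_or_none_of_perturbation S 0 0 (isPeirceMatrix_zero _ _) (isPeirceMatrix_zero _ _)
    (by simp) (by simp) ?_
  intro i j
  by_cases h0 : F i j = 0
  · simp [h0]
  · have := h i j h0
    by_cases hj : j.1 ∈ S
    · simp [this.2 hj, hj]
    · simp [mt this.1 hj, hj]

theorem exists_of_ne_zero (hF : IsStringMatrix B K F) {i : I} {j : J} (h : F i j ≠ 0) :
    ∃ (d d' : B.Arrow) (c : K), B.src d = i.1 ∧ B.src d' = j.1 ∧ d.fst = d'.fst ∧ d ≠ d' ∧ c ≠ 0 ∧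
      F i j = c • B.arc K d d' :=
  (hF.peirce i j).exists_of_ne_zero (fun h => hF.disjoint i.1 i.2 (h ▸ j.2)) h

theorem mem_branch_iff_of_not_linked (hF : IsStringMatrix B K F) {a : B.Arrow}
    (h : ∀ p q : B.Arrow, p.fst = q.fst → Linked F p q → p ≠ a ∧ q ≠ a) (i : I) (j : J)
    (hij : F i j ≠ 0) : i.1 ∈ B.branch a ↔ j.1 ∈ B.branch a := by
  obtain ⟨d, d', c, hd, hd', hf, -, -, -⟩ := hF.exists_of_ne_zero hij
  have hl := h d d' hf (linked_of_ne_zero hd hd' hij)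
  have hz : d.fst ∈ i.1.1 := by rw [← hd]; exact B.mem_src_iff.2 (Or.inl rfl)
  have hz' : d.fst ∈ j.1.1 := by rw [← hd']; exact B.mem_src_iff.2 (Or.inl hf)
  by_contra hcon
  by_cases hi : i.1 ∈ B.branch a
  · have hx := B.eq_fst_of_mem_branch hi (fun hj => hcon ⟨fun _ => hj, fun _ => hi⟩) hz hz'
    exact hl.1 (B.eq_of_src_eq_of_fst_eq
      (hd.trans (B.eq_of_mem_branch_of_fst_mem hi (hx ▸ hz))) hx)
  · have hj : j.1 ∈ B.branch a := by
      by_contra hj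
      exact hcon ⟨fun h => absurd h hi, fun h => absurd h hj⟩
    have hx := B.eq_fst_of_mem_branch hj hi hz' hz
    exact hl.2 (B.eq_of_src_eq_of_fst_eq
      (hd'.trans (B.eq_of_mem_branch_of_fst_mem hj (hx ▸ hz'))) (hf.symm.trans hx))

/-- If the diagram has no arrows at the root of a branch that start or end at the edge of the root,
then all its marked vertices lie in the branch as soon as one does. -/
theorem mem_branch_of_not_linked (hF : IsStringMatrix B K F) {a : B.Arrow}
    (h : ∀ p q : B.Arrow, p.fst = q.fst → Linked F p q → p ≠ a ∧ q ≠ a) {x : B.Edge}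
    (hx : x ∈ I ∨ x ∈ J) (hxa : x ∈ B.branch a) {y : B.Edge} (hy : y ∈ I ∨ y ∈ J) :
    y ∈ B.branch a := by
  rcases hF.all_or_none (B.branch a) (hF.mem_branch_iff_of_not_linked h) with h | h
  · exact absurd hxa (hx.elim (h.1 x) (h.2 x))
  · exact hy.elim (h.1 y) (h.2 y)

/-- Two marked vertices on a common cycle are a source and a sink with a nonzero component of the
differential between them. -/
theorem linked_of_fst_eq (hF : IsStringMatrix B K F) {a b : B.Arrow} (hf : a.fst = b.fst)
    (hab : a ≠ b) (ha : B.src a ∈ I ∨ B.src a ∈ J) (hb : B.src b ∈ I ∨ B.src b ∈ J) :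
    Linked F a b ∨ Linked F b a := by
  classical
  have hmem : ∀ d : B.Arrow, d.fst ∈ (B.src d).1 := fun d => B.mem_src_iff.2 (Or.inl rfl)
  have hsrc : ∀ d e : B.Arrow, e.fst = d.fst → B.src e ∈ B.branch d → e = d := fun d e h he =>
    B.eq_of_src_eq_of_fst_eq (B.eq_of_mem_branch_of_fst_mem he (h ▸ hmem e)) h
  by_cases hex : ∃ n, ∃ p q : B.Arrow, p.fst = a.fst ∧ q.fst = a.fst ∧ Linked F p q ∧
      B.dist p q = n
  · obtain ⟨p, q, hpx, hqx, hpq, hn⟩ := Nat.find_spec hex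
    have hmin : ∀ p' q' : B.Arrow, p'.fst = a.fst → q'.fst = a.fst → Linked F p' q' →
        B.dist p q ≤ B.dist p' q' := fun p' q' h1 h2 h3 => by
      rw [hn]
      exact Nat.find_min' hex ⟨p', q', h1, h2, h3, rfl⟩
    obtain ⟨hp, hq, hne⟩ := hpq
    have hpq' : p ≠ q := by
      rintro rfl
      exact hF.disjoint _ hp hq
    obtain ⟨c₀, hc₀⟩ := (hF.peirce ⟨B.src p, hp⟩ ⟨B.src q, hq⟩).exists_eq_smul_arc
      (hpx.trans hqx.symm) hpq'
    have hc₀0 : c₀ ≠ 0 := by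
      rintro rfl
      exact hne (by rw [hc₀, zero_smul])
    set S : Set B.Edge := B.branch p ∪ B.branch q with hS
    have hpS : B.src p ∈ S := Or.inl (B.src_mem_branch p)
    have hqS : B.src q ∈ S := Or.inr (B.src_mem_branch q)
    -- edges inside and outside of `S` meet only at the root
    have hcross : ∀ d d' : B.Arrow, d.fst = d'.fst → B.src d ∈ S → B.src d' ∉ S →
        d.fst = a.fst := by
      intro d d' h h1 h2
      rcases h1 with h1 | h1
      · rw [← hpx]
        exact B.eq_fst_of_mem_branch h1 (fun h3 => h2 (Or.inl h3)) (hmem d) (h ▸ hmem d')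
      · rw [← hqx]
        exact B.eq_fst_of_mem_branch h1 (fun h3 => h2 (Or.inr h3)) (hmem d) (h ▸ hmem d')
    have hroot : ∀ d : B.Arrow, d.fst = a.fst → B.src d ∈ S → d = p ∨ d = q := by
      intro d h h1
      rcases h1 with h1 | h1
      · exact Or.inl (hsrc p d (h.trans hpx.symm) h1)
      · exact Or.inr (hsrc q d (h.trans hqx.symm) h1)
    have hν : ∀ i : I, ∃ ν : B.Alg K, B.IsPeirce K i.1 (B.src p) ν ∧ (i.1 ∈ S → ν = 0) ∧
        (i.1 ∉ S → ν * F ⟨B.src p, hp⟩ ⟨B.src q, hq⟩ = - F i ⟨B.src q, hq⟩) ∧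
        ∀ d d' : B.Arrow, d.fst = d'.fst → d ≠ d' → d.fst ≠ a.fst → ν * B.arc K d d' = 0 := by
      intro i
      by_cases hi : i.1 ∈ S
      · exact ⟨0, isPeirce_zero _ _, fun _ => rfl, fun h => absurd hi h, by simp⟩
      by_cases h0 : F i ⟨B.src q, hq⟩ = 0
      · exact ⟨0, isPeirce_zero _ _, fun _ => rfl, fun _ => by simp [h0], by simp⟩
      obtain ⟨r, q', c, hr, hq', hrf, hrq, -, hc⟩ := hF.exists_of_ne_zero h0
      simp only at hq'
      have hrS : B.src r ∉ S := by rwa [hr]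
      have hx : q'.fst = a.fst := hcross q' r hrf.symm (hq' ▸ hqS) hrS
      obtain rfl : q' = q := B.eq_of_src_eq_of_fst_eq hq' (hx.trans hqx.symm)
      have hrp : r ≠ p := by
        rintro rfl
        exact hrS hpS
      have hle := hmin r q' (hrf.trans hx) hx (linked_of_ne_zero hr rfl h0)
      have hrpf : r.fst = p.fst := (hrf.trans hx).trans hpx.symm
      have harc := B.arc_mul_arc_of_dist_le' (K := K) hrpf (hpx.trans hx.symm) hle
      refine ⟨-(c * c₀⁻¹) • B.arc K r p, ?_, fun h => absurd h hi, fun _ => ?_, ?_⟩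
      · rw [← hr]
        exact (isPeirce_arc hrpf hrp).smul _
      · rw [hc, hc₀, smul_mul_smul_comm, harc, neg_mul, mul_assoc, inv_mul_cancel₀ hc₀0, mul_one,
          neg_smul]
      · intro d d' h1 h2 h3
        rw [smul_mul_assoc, B.arc_mul_arc_of_fst_ne hrpf h1 hrp h2
          (fun h => h3 (by rw [← h, hrf, hx])), smul_zero]
    have hμ : ∀ j : J, ∃ μ : B.Alg K, B.IsPeirce K (B.src q) j.1 μ ∧ (j.1 ∈ S → μ = 0) ∧
        (j.1 ∉ S → F ⟨B.src p, hp⟩ ⟨B.src q, hq⟩ * μ = F ⟨B.src p, hp⟩ j) ∧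
        ∀ d d' : B.Arrow, d.fst = d'.fst → d ≠ d' → d.fst ≠ a.fst → B.arc K d d' * μ = 0 := by
      intro j
      by_cases hj : j.1 ∈ S
      · exact ⟨0, isPeirce_zero _ _, fun _ => rfl, fun h => absurd hj h, by simp⟩
      by_cases h0 : F ⟨B.src p, hp⟩ j = 0
      · exact ⟨0, isPeirce_zero _ _, fun _ => rfl, fun _ => by simp [h0], by simp⟩
      obtain ⟨p', r, c, hp', hr, hrf, hrp, -, hc⟩ := hF.exists_of_ne_zero h0
      simp only at hp'
      have hrS : B.src r ∉ S := by rwa [hr]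
      have hx : p'.fst = a.fst := hcross p' r hrf (hp' ▸ hpS) hrS
      obtain rfl : p' = p := B.eq_of_src_eq_of_fst_eq hp' (hx.trans hpx.symm)
      have hrq : q ≠ r := by
        rintro rfl
        exact hrS hqS
      have hle := hmin p' r hx (hrf.symm.trans hx) (linked_of_ne_zero rfl hr h0)
      have hrqf : q.fst = r.fst := hqx.trans (hx.symm.trans hrf)
      have harc := B.arc_mul_arc_of_dist_le (K := K) (hpx.trans hqx.symm) hrqf hle
      refine ⟨(c₀⁻¹ * c) • B.arc K q r, ?_, fun h => absurd h hj, fun _ => ?_, ?_⟩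
      · rw [← hr]
        exact (isPeirce_arc hrqf hrq).smul _
      · rw [hc, hc₀, smul_mul_smul_comm, harc, ← mul_assoc, mul_inv_cancel₀ hc₀0, one_mul]
      · intro d d' h1 h2 h3
        rw [mul_smul_comm, B.arc_mul_arc_of_fst_ne h1 hrqf h2 hrq
          (fun h => h3 (by rw [h, hqx])), smul_zero]
    choose ν hν₁ hν₂ hν₃ hν₄ using hν
    choose μ hμ₁ hμ₂ hμ₃ hμ₄ using hμ
    have hall := hF.all_or_none_of_perturbation S
      (fun i i' => if i'.1 = B.src p then ν i else 0)
      (fun j j' => if j.1 = B.src q then μ j' else 0)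
      (by
        intro i i'
        simp only
        split_ifs with h
        · rw [h]; exact hν₁ i
        · exact isPeirce_zero _ _)
      (by
        intro j j'
        simp only
        split_ifs with h
        · rw [h]; exact hμ₁ j'
        · exact isPeirce_zero _ _)
      (by
        intro i i' h
        simp only [ne_eq, ite_eq_right_iff, Classical.not_imp] at h
        exact ⟨fun hi => h.2 (hν₂ i hi), h.1 ▸ hpS⟩)
      (by
        intro j j' h
        simp only [ne_eq, ite_eq_right_iff, Classical.not_imp] at h
        exact ⟨h.1 ▸ hqS, fun hj => h.2 (hμ₂ j' hj)⟩)
      (by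
        intro i j
        have s₀ : ∑ i' : I, (if i'.1 = B.src p then ν i else 0) * F i' j =
            ν i * F ⟨B.src p, hp⟩ j := by
          rw [Finset.sum_eq_single ⟨B.src p, hp⟩]
          · simp
          · intro i' _ h
            rw [if_neg (fun h' => h (Subtype.ext h')), zero_mul]
          · simp
        have s₁ : ∑ j' : J, F i j' * (if j'.1 = B.src q then μ j else 0) =
            F i ⟨B.src q, hq⟩ * μ j := by
          rw [Finset.sum_eq_single ⟨B.src q, hq⟩]
          · simp
          · intro j' _ h
            rw [if_neg (fun h' => h (Subtype.ext h')), mul_zero]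
          · simp
        rw [s₀, s₁]
        by_cases hi : i.1 ∈ S <;> by_cases hj : j.1 ∈ S
        · simp [hi, hj, hν₂ i hi, hμ₂ j hj]
        · simp only [hi, hj, if_true, if_false, sub_zero, hν₂ i hi, zero_mul, zero_add]
          by_cases hip : i.1 = B.src p
          · obtain rfl : i = ⟨B.src p, hp⟩ := Subtype.ext hip
            exact (hμ₃ j hj).symm
          · have hnot : ∀ d : B.Arrow, B.src d = i.1 → d.fst ≠ a.fst := by
              intro d hd hda
              rcases hroot d hda (hd ▸ hi) with rfl | rfl
              · exact hip hd.symm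
              · exact hF.disjoint i.1 i.2 (hd ▸ hq)
            have z₁ : F i j = 0 := by
              by_contra h0
              obtain ⟨d, d', -, hd, hd', hdf, -⟩ := hF.exists_of_ne_zero h0
              exact hnot d hd (hcross d d' hdf (hd ▸ hi) (hd' ▸ hj))
            have z₂ : F i ⟨B.src q, hq⟩ * μ j = 0 := by
              by_cases h0 : F i ⟨B.src q, hq⟩ = 0
              · rw [h0, zero_mul]
              · obtain ⟨d, d', c, hd, hd', hdf, hdd, -, hc⟩ := hF.exists_of_ne_zero h0
                rw [hc, smul_mul_assoc, hμ₄ j d d' hdf hdd (hnot d hd), smul_zero]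
            rw [z₁, z₂]
        · simp only [hi, hj, if_true, if_false, zero_sub, hμ₂ j hj, mul_zero, add_zero]
          by_cases hjq : j.1 = B.src q
          · obtain rfl : j = ⟨B.src q, hq⟩ := Subtype.ext hjq
            exact (hν₃ i hi).symm
          · have hnot : ∀ d : B.Arrow, B.src d = j.1 → d.fst ≠ a.fst := by
              intro d hd hda
              rcases hroot d hda (hd ▸ hj) with rfl | rfl
              · exact hF.disjoint _ hp (hd ▸ j.2)
              · exact hjq hd.symm
            have z₁ : F i j = 0 := by
              by_contra h0
              obtain ⟨d, d', -, hd, hd', hdf, -⟩ := hF.exists_of_ne_zero h0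
              exact hnot d' hd' (hcross d' d hdf.symm (hd' ▸ hj) (hd ▸ hi))
            have z₂ : ν i * F ⟨B.src p, hp⟩ j = 0 := by
              by_cases h0 : F ⟨B.src p, hp⟩ j = 0
              · rw [h0, mul_zero]
              · obtain ⟨d, d', c, hd, hd', hdf, hdd, -, hc⟩ := hF.exists_of_ne_zero h0
                rw [hc, mul_smul_comm, hν₄ i d d' hdf hdd (hdf ▸ hnot d' hd'), smul_zero]
            rw [z₁, z₂, neg_zero]
        · simp only [hi, hj, if_false, sub_self]
          rw [← hμ₃ j hj, ← mul_assoc, hν₃ i hi, neg_mul, neg_add_cancel])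
    have hall' : ∀ x, x ∈ I ∨ x ∈ J → x ∈ S := by
      rcases hall with h | h
      · exact absurd hpS (h.1 _ hp)
      · exact fun x hx => hx.elim (h.1 x) (h.2 x)
    rcases hroot a rfl (hall' _ ha) with rfl | rfl <;>
      rcases hroot b hf.symm (hall' _ hb) with rfl | rfl
    · exact absurd rfl hab
    · exact Or.inl ⟨hp, hq, hne⟩
    · exact Or.inr ⟨hp, hq, hne⟩
    · exact absurd rfl hab
  · exfalso
    have hnl : ∀ p q : B.Arrow, p.fst = q.fst → Linked F p q → p ≠ a ∧ q ≠ a :=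
      fun p q h1 h2 => ⟨fun h => hex ⟨_, p, q, by rw [h], by rw [← h1, h], h2, rfl⟩,
        fun h => hex ⟨_, p, q, by rw [h1, h], by rw [h], h2, rfl⟩⟩
    exact hab (hsrc a b hf.symm
      (hF.mem_branch_of_not_linked hnl ha (B.src_mem_branch a) hb)).symm

theorem linked_of_mem (hF : IsStringMatrix B K F) {p q : B.Arrow} (hp : B.src p ∈ I)
    (hq : B.src q ∈ J) (hf : p.fst = q.fst) : Linked F p q := by
  have hne : p ≠ q := by
    rintro rfl
    exact hF.disjoint _ hp hq
  rcases hF.linked_of_fst_eq hf hne (Or.inl hp) (Or.inr hq) with h | h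
  · exact h
  · exact absurd hq (hF.disjoint _ h.1)

theorem eq_of_mem_left (hF : IsStringMatrix B K F) {p q : B.Arrow} (hp : B.src p ∈ I)
    (hq : B.src q ∈ I) (hf : p.fst = q.fst) : p = q := by
  by_contra hne
  rcases hF.linked_of_fst_eq hf hne (Or.inl hp) (Or.inl hq) with h | h
  · exact hF.disjoint _ hq h.2.1
  · exact hF.disjoint _ hp h.2.1

theorem eq_of_mem_right (hF : IsStringMatrix B K F) {p q : B.Arrow} (hp : B.src p ∈ J)
    (hq : B.src q ∈ J) (hf : p.fst = q.fst) : p = q := by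
  by_contra hne
  rcases hF.linked_of_fst_eq hf hne (Or.inr hp) (Or.inr hq) with h | h
  · exact hF.disjoint _ h.1 hp
  · exact hF.disjoint _ h.1 hq

theorem exists_linked_of_mem_right (hF : IsStringMatrix B K F) {k : B.Edge} (hk : k ∈ J) :
    ∃ p q : B.Arrow, B.src q = k ∧ p.fst = q.fst ∧ Linked F p q := by
  by_contra hcon
  rcases hF.all_or_none {k} (fun i j hij => by
    obtain ⟨d, d', c, hd, hd', hf, -, -, -⟩ := hF.exists_of_ne_zero hij
    have hi : i.1 ≠ k := fun h => hF.disjoint _ i.2 (h ▸ hk)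
    have hj : j.1 ≠ k := fun h =>
      hcon ⟨d, d', hd'.trans h, hf, linked_of_ne_zero hd hd' hij⟩
    simp [hi, hj]) with h | h
  · exact h.2 k hk rfl
  · obtain ⟨x, hx⟩ := hF.nonempty_left
    obtain rfl : x = k := h.1 x hx
    exact hF.disjoint _ hx hk

theorem exists_linked_of_mem_left (hF : IsStringMatrix B K F) {k : B.Edge} (hk : k ∈ I) :
    ∃ p q : B.Arrow, B.src p = k ∧ p.fst = q.fst ∧ Linked F p q := by
  by_contra hcon
  rcases hF.all_or_none {k} (fun i j hij => by
    obtain ⟨d, d', c, hd, hd', hf, -, -, -⟩ := hF.exists_of_ne_zero hij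
    have hj : j.1 ≠ k := fun h => hF.disjoint _ hk (h ▸ j.2)
    have hi : i.1 ≠ k := fun h =>
      hcon ⟨d, d', hd.trans h, hf, linked_of_ne_zero hd hd' hij⟩
    simp [hi, hj]) with h | h
  · exact h.1 k hk rfl
  · obtain ⟨x, hx⟩ := hF.nonempty_right
    obtain rfl : x = k := h.2 x hx
    exact hF.disjoint _ hk hx

end IsStringMatrix

end StringMatrix

/-! ### Diagrams -/

section Diagrams

open BrauerTree IsStringMatrix

variable {V : Type v} {B : BrauerTree V} {K : Type u} [Field K]
  {T : CochainComplex (ModuleCat.{max u v} (B.Alg K)) ℤ} {D : TermDecomposition B K T}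

namespace TermDecomposition

theorem src_mem_vertices {a : B.Arrow} (ha : a ∈ D.arrows) : B.src a ∈ D.vertices :=
  Or.inr ⟨a, ha, Or.inl rfl⟩

theorem src_next_mem_vertices {a : B.Arrow} (ha : a ∈ D.arrows) : B.src (B.next a) ∈ D.vertices :=
  Or.inr ⟨a, ha, Or.inr rfl⟩

section Finite

variable [Finite V]

theorem mem_arrows_iff (a : B.Arrow) :
    a ∈ D.arrows ↔ ∃ p q : B.Arrow, p.fst = q.fst ∧ Linked D.entry p q ∧
      ∃ l < B.dist p q, a = (B.next ^ l) p := by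
  constructor
  · rintro ⟨i, j, hij, d, m, hd, hm, hlt, l, hl, rfl⟩
    rw [component_ne_zero_iff] at hij
    refine ⟨d, (B.next ^ m) d, (B.next_pow_fst d m).symm, linked_of_ne_zero hd hm hij, l, ?_, rfl⟩
    rwa [B.dist_eq hlt rfl]
  · rintro ⟨p, q, hf, ⟨hp, hq, hne⟩, l, hl, rfl⟩
    refine ⟨⟨_, hp⟩, ⟨_, hq⟩, (D.component_ne_zero_iff _ _).2 hne, p, B.dist p q, rfl, ?_,
      B.dist_lt hf, l, hl, rfl⟩
    rw [B.next_pow_dist hf]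

theorem mem_arrows_of_linked (hF : IsStringMatrix B K D.entry) {p q : B.Arrow}
    (hf : p.fst = q.fst) (h : Linked D.entry p q) : p ∈ D.arrows :=
  (mem_arrows_iff p).2 ⟨p, q, hf, h, 0, B.dist_pos hf (ne_of_linked hF h), rfl⟩

theorem exists_mem_arrows_of_linked (hF : IsStringMatrix B K D.entry) {p q : B.Arrow}
    (hf : p.fst = q.fst) (h : Linked D.entry p q) : ∃ a ∈ D.arrows, B.next a = q := by
  have h0 := B.dist_pos hf (ne_of_linked hF h)
  refine ⟨(B.next ^ (B.dist p q - 1)) p, (mem_arrows_iff _).2 ⟨p, q, hf, h, _, by lia, rfl⟩, ?_⟩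
  rw [← Equiv.Perm.mul_apply, ← pow_succ', Nat.sub_add_cancel h0, B.next_pow_dist hf]

theorem next_ne_of_mem_arrows {a : B.Arrow} (ha : a ∈ D.arrows) : B.next a ≠ a := by
  obtain ⟨p, q, hf, h, l, hl, rfl⟩ := (mem_arrows_iff a).1 ha
  intro h0
  rw [← Equiv.Perm.mul_apply, ← pow_succ'] at h0
  have hlt := B.dist_lt hf
  have := B.eq_of_next_pow_eq p (by lia) (by lia) h0
  lia

theorem src_notMem_right_of_mem_arrows (hF : IsStringMatrix B K D.entry) {a : B.Arrow}
    (ha : a ∈ D.arrows) : B.src a ∉ D.J := by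
  obtain ⟨p, q, hf, ⟨hp, hq, -⟩, l, hl, rfl⟩ := (mem_arrows_iff a).1 ha
  intro h
  have h1 := hF.eq_of_mem_right h hq ((B.next_pow_fst p l).trans hf)
  have := B.dist_le h1
  lia

theorem src_next_notMem_left_of_mem_arrows (hF : IsStringMatrix B K D.entry) {a : B.Arrow}
    (ha : a ∈ D.arrows) : B.src (B.next a) ∉ D.I := by
  obtain ⟨p, q, hf, ⟨hp, hq, -⟩, l, hl, rfl⟩ := (mem_arrows_iff a).1 ha
  intro h
  rw [← Equiv.Perm.mul_apply, ← pow_succ'] at h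
  have h1 := hF.eq_of_mem_left h hp (B.next_pow_fst p _)
  have hlt := B.dist_lt hf
  have := B.eq_of_next_pow_eq p (m := l + 1) (n := 0) (by lia) (by lia) h1
  lia

theorem exists_interior (k : B.Edge) (hk : k ∈ D.vertices) (hm : ¬ D.IsMarked k) :
    ∃ p q δ : B.Arrow, p.fst = q.fst ∧ p.fst = δ.fst ∧ Linked D.entry p q ∧ B.src δ = k ∧
      0 < B.dist p δ ∧ B.dist p δ < B.dist p q ∧ δ ∈ D.arrows ∧ ∃ a ∈ D.arrows, B.next a = δ := by
  have key : ∀ (p q : B.Arrow) (l : ℕ), p.fst = q.fst → Linked D.entry p q → l ≤ B.dist p q →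
      B.src ((B.next ^ l) p) = k →
      ∃ p q δ : B.Arrow, p.fst = q.fst ∧ p.fst = δ.fst ∧ Linked D.entry p q ∧ B.src δ = k ∧
      0 < B.dist p δ ∧ B.dist p δ < B.dist p q ∧ δ ∈ D.arrows ∧
      ∃ a ∈ D.arrows, B.next a = δ := by
    intro p q l hf h hl hk
    have hl0 : l ≠ 0 := by
      rintro rfl
      exact hm (Or.inl (hk ▸ h.1))
    have hlm : l ≠ B.dist p q := by
      rintro rfl
      rw [B.next_pow_dist hf] at hk
      exact hm (Or.inr (hk ▸ h.2.1))
    have hd : B.dist p ((B.next ^ l) p) = l :=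
      B.dist_eq (lt_of_le_of_lt hl (B.dist_lt hf)) rfl
    refine ⟨p, q, (B.next ^ l) p, hf, (B.next_pow_fst p l).symm, h, hk, by lia, by lia,
      (mem_arrows_iff _).2 ⟨p, q, hf, h, l, by lia, rfl⟩, (B.next ^ (l - 1)) p,
      (mem_arrows_iff _).2 ⟨p, q, hf, h, l - 1, by lia, rfl⟩, ?_⟩
    rw [← Equiv.Perm.mul_apply, ← pow_succ', Nat.sub_add_cancel (by lia)]
  rcases hk with hk | ⟨a, ha, hk⟩
  · exact absurd hk hm
  · obtain ⟨p, q, hf, h, l, hl, rfl⟩ := (mem_arrows_iff a).1 ha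
    rcases hk with hk | hk
    · exact key p q l hf h hl.le hk
    · refine key p q (l + 1) hf h hl ?_
      rwa [pow_succ', Equiv.Perm.mul_apply]

end Finite

end TermDecomposition

open TermDecomposition

variable [Finite V] {S : CochainComplex (ModuleCat.{max u v} (B.Alg K)) ℤ} {DS : TermDecomposition B K S}
  {DT : TermDecomposition B K T}

section Intersection

variable {k : B.Edge}

theorem notMem_arrows_of_inter_subset (hk : DS.vertices ∩ DT.vertices ⊆ {k}) {a : B.Arrow}
    (ha : a ∈ DS.arrows) : a ∉ DT.arrows := by
  intro ha'
  have h1 : B.src a = k := hk ⟨src_mem_vertices ha, src_mem_vertices ha'⟩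
  have h2 : B.src (B.next a) = k := hk ⟨src_next_mem_vertices ha, src_next_mem_vertices ha'⟩
  exact next_ne_of_mem_arrows ha (B.eq_of_src_eq_of_fst_eq (h2.trans h1.symm) (B.next_fst a))

theorem isDegreeOneSink_of_mem (hS : IsStringMatrix B K DS.entry)
    (hT : IsStringMatrix B K DT.entry) (hk : DS.vertices ∩ DT.vertices ⊆ {k}) (h : k ∈ DS.J)
    (h' : k ∈ DT.J) : DS.IsDegreeOneSink k := by
  refine ⟨h, ?_⟩
  obtain ⟨p, q, hq, hf, hl⟩ := hS.exists_linked_of_mem_right h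
  obtain ⟨a, ha, haq⟩ := exists_mem_arrows_of_linked hS hf hl
  obtain ⟨p', q', hq', hf', hl'⟩ := hT.exists_linked_of_mem_right h'
  obtain ⟨b, hb, hbq⟩ := exists_mem_arrows_of_linked hT hf' hl'
  have hqq : q ≠ q' := by
    rintro rfl
    obtain rfl : a = b := B.next.injective (haq.trans hbq.symm)
    exact notMem_arrows_of_inter_subset hk ha hb
  have hsymm : q' = q.symm := (B.src_eq_iff.1 (hq'.trans hq.symm)).resolve_left hqq.symm
  have : {c | c ∈ DS.arrows ∧ (B.src c = k ∨ B.tgt c = k)} = {a} := by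
    ext c
    constructor
    · rintro ⟨hc, hc' | hc'⟩
      · exact absurd (hc' ▸ h) (src_notMem_right_of_mem_arrows hS hc)
      · rcases B.src_eq_iff.1 (hc'.trans hq.symm) with h1 | h1
        · exact B.next.injective (h1.trans haq.symm)
        · rw [← hsymm] at h1
          obtain rfl : c = b := B.next.injective (h1.trans hbq.symm)
          exact absurd hb (notMem_arrows_of_inter_subset hk hc)
    · rintro rfl
      exact ⟨ha, Or.inr (by rw [tgt, haq, hq])⟩
  rw [degree, this, Set.ncard_singleton]

theorem isDegreeOneSource_of_mem (hS : IsStringMatrix B K DS.entry)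
    (hT : IsStringMatrix B K DT.entry) (hk : DS.vertices ∩ DT.vertices ⊆ {k}) (h : k ∈ DS.I)
    (h' : k ∈ DT.I) : DS.IsDegreeOneSource k := by
  refine ⟨h, ?_⟩
  obtain ⟨p, q, hp, hf, hl⟩ := hS.exists_linked_of_mem_left h
  have ha := mem_arrows_of_linked hS hf hl
  obtain ⟨p', q', hp', hf', hl'⟩ := hT.exists_linked_of_mem_left h'
  have hb := mem_arrows_of_linked hT hf' hl'
  have hpp : p ≠ p' := by
    rintro rfl
    exact notMem_arrows_of_inter_subset hk ha hb
  have hsymm : p' = p.symm := (B.src_eq_iff.1 (hp'.trans hp.symm)).resolve_left hpp.symm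
  have : {c | c ∈ DS.arrows ∧ (B.src c = k ∨ B.tgt c = k)} = {p} := by
    ext c
    constructor
    · rintro ⟨hc, hc' | hc'⟩
      · rcases B.src_eq_iff.1 (hc'.trans hp.symm) with h1 | h1
        · exact h1
        · rw [← hsymm] at h1
          subst h1
          exact absurd hb (notMem_arrows_of_inter_subset hk hc)
      · exact absurd (by rwa [show B.src (B.next c) = k from hc'])
          (src_next_notMem_left_of_mem_arrows hS hc)
    · rintro rfl
      exact ⟨ha, Or.inl hp⟩
  rw [degree, this, Set.ncard_singleton]

/-- Edges in opposite branches of `d`, other than the edge of `d`, have no common vertex. -/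
theorem eq_zero_of_mem_branch {d : B.Arrow} {a b : B.Edge} {x : B.Alg K}
    (hx : B.IsPeirce K a b x) (ha : a ∈ B.branch d) (hb : b ∈ B.branch d.symm) (had : a ≠ B.src d)
    (hbd : b ≠ B.src d) : x = 0 := by
  have hb' : b ∉ B.branch d := fun h => hbd (B.eq_of_mem_branch_of_mem_branch_symm h hb)
  by_contra h0
  obtain ⟨e, e', -, rfl, rfl, hf, -⟩ := hx.exists_of_ne_zero (fun h => hb' (h ▸ ha)) h0
  have hz : e.fst ∈ (B.src e).1 := B.mem_src_iff.2 (Or.inl rfl)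
  have h1 := B.eq_fst_of_mem_branch ha hb' hz (B.mem_src_iff.2 (Or.inl hf))
  exact had (B.eq_of_mem_branch_of_fst_mem ha (h1 ▸ hz))

variable [HasDerivedCategory.{w} (ModuleCat.{max u v} (B.Alg K))]

theorem homVanishes_of_not_isMarked
    (tS : IsIndecTwoTermPartialTilting S) (tT : IsIndecTwoTermPartialTilting T)
    (hS : IsStringMatrix B K DS.entry) (hT : IsStringMatrix B K DT.entry)
    (hk : DS.vertices ∩ DT.vertices = {k})
    (h : ¬ DS.IsMarked k) (h' : ¬ DT.IsMarked k) : HomVanishes S T (-1) := by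
  have hk' : k ∈ DS.vertices ∩ DT.vertices := hk ▸ rfl
  obtain ⟨p, q, δ, hf, hfδ, hl, hδ, -, -, ha, -⟩ := exists_interior k hk'.1 h
  obtain ⟨p', q', δ', hf', hfδ', hl', hδ', -, -, ha', -⟩ := exists_interior k hk'.2 h'
  have hne : δ ≠ δ' := by
    rintro rfl
    exact notMem_arrows_of_inter_subset hk.subset ha ha'
  obtain rfl : δ' = δ.symm := (B.src_eq_iff.1 (hδ'.trans hδ.symm)).resolve_left hne.symm
  have hSb : ∀ y, y ∈ DS.I ∨ y ∈ DS.J → y ∈ B.branch δ.symm := fun y hy =>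
    hS.mem_branch_of_not_linked (x := B.src p)
      (fun a b _ hab => ⟨fun e => h (Or.inl (by rw [← hδ', ← e]; exact hab.1)),
        fun e => h (Or.inr (by rw [← hδ', ← e]; exact hab.2.1))⟩) (Or.inl hl.1)
      (B.mem_branch_of_snd_mem (B.mem_src_iff.2 (Or.inl hfδ.symm))) hy
  have hTb : ∀ y, y ∈ DT.I ∨ y ∈ DT.J → y ∈ B.branch δ := fun y hy =>
    hT.mem_branch_of_not_linked (x := B.src p')
      (fun a b _ hab => ⟨fun e => h' (Or.inl (by rw [← hδ, ← e]; exact hab.1)),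
        fun e => h' (Or.inr (by rw [← hδ, ← e]; exact hab.2.1))⟩) (Or.inl hl'.1)
      (B.mem_branch_of_snd_mem (B.mem_src_iff.2 (Or.inl hfδ'.symm))) hy
  rw [homVanishes_iff_matrix tS tT DS DT]
  intro G hG _ _
  ext j i
  refine eq_zero_of_mem_branch (d := δ.symm) (hG j i) (hSb _ (Or.inr j.2)) (hTb _ (Or.inl i.2))
    ?_ ?_
  · rw [hδ']
    exact fun e => h (Or.inr (e ▸ j.2))
  · rw [hδ']
    exact fun e => h' (Or.inl (e ▸ i.2))

theorem homVanishes_of_mem_right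
    (tS : IsIndecTwoTermPartialTilting S) (tT : IsIndecTwoTermPartialTilting T)
    (hS : IsStringMatrix B K DS.entry) (hT : IsStringMatrix B K DT.entry)
    (hk : DS.vertices ∩ DT.vertices = {k})
    (h : k ∈ DS.J) (h' : k ∈ DT.J) : HomVanishes S T (-1) := by
  obtain ⟨p, q, hq, hf, hl⟩ := hS.exists_linked_of_mem_right h
  obtain ⟨a, ha, haq⟩ := exists_mem_arrows_of_linked hS hf hl
  obtain ⟨p', q', hq', hf', hl'⟩ := hT.exists_linked_of_mem_right h'
  obtain ⟨b, hb, hbq⟩ := exists_mem_arrows_of_linked hT hf' hl'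
  have hne : q ≠ q' := by
    rintro rfl
    obtain rfl : a = b := B.next.injective (haq.trans hbq.symm)
    exact notMem_arrows_of_inter_subset hk.subset ha hb
  obtain rfl : q' = q.symm := (B.src_eq_iff.1 (hq'.trans hq.symm)).resolve_left hne.symm
  have hSb : ∀ y, y ∈ DS.I ∨ y ∈ DS.J → y ∈ B.branch q.symm := fun y hy =>
    hS.mem_branch_of_not_linked (x := k)
      (fun c d hcd hcl => ⟨fun e => hS.disjoint _ hcl.1 (by rwa [e, hq']), by
        rintro rfl
        obtain ⟨c', hc, hc'⟩ := exists_mem_arrows_of_linked hS hcd hcl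
        obtain rfl : c' = b := B.next.injective (hc'.trans hbq.symm)
        exact notMem_arrows_of_inter_subset hk.subset hc hb⟩) (Or.inr h)
      (hq' ▸ B.src_mem_branch _) hy
  have hTb : ∀ y, y ∈ DT.I ∨ y ∈ DT.J → y ∈ B.branch q := fun y hy =>
    hT.mem_branch_of_not_linked (x := k)
      (fun c d hcd hcl => ⟨fun e => hT.disjoint _ hcl.1 (by rwa [e, hq]), by
        rintro rfl
        obtain ⟨c', hc, hc'⟩ := exists_mem_arrows_of_linked hT hcd hcl
        obtain rfl : c' = a := B.next.injective (hc'.trans haq.symm)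
        exact notMem_arrows_of_inter_subset hk.subset ha hc⟩) (Or.inr h')
      (hq ▸ B.src_mem_branch _) hy
  rw [homVanishes_iff_matrix tS tT DS DT]
  intro G hG _ h2
  have hi : ∀ i : DT.I, i.1 ≠ k := fun i e => hT.disjoint _ i.2 (e ▸ h')
  have harc : ∀ i : DT.I, G ⟨k, h⟩ i ≠ 0 → ∃ (e : B.Arrow) (c : K), B.src e = i.1 ∧
      e.fst = q.symm.fst ∧ q.symm ≠ e ∧ c ≠ 0 ∧ G ⟨k, h⟩ i = c • B.arc K q.symm e := by
    intro i h0
    obtain ⟨e, e', c, he, he', hee, hne₁, hc, hG'⟩ :=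
      (hG ⟨k, h⟩ i).exists_of_ne_zero (hi i).symm h0
    rcases B.src_eq_iff.1 (he.trans hq.symm) with rfl | rfl
    · have := B.eq_of_mem_branch_of_fst_mem (hTb i.1 (Or.inl i.2))
        (he' ▸ B.mem_src_iff.2 (Or.inl hee))
      exact absurd (this.trans hq) (hi i)
    · exact ⟨e', c, he', hee.symm, hne₁, hc, hG'⟩
  ext j i
  by_cases hj : j.1 = k
  · obtain rfl : j = ⟨k, h⟩ := Subtype.ext hj
    by_contra h0
    obtain ⟨e, c, he, hef, hne, hc, hGe⟩ := harc i h0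
    have hsum := h2 ⟨k, h⟩ ⟨k, h'⟩
    rw [Finset.sum_eq_single i] at hsum
    · obtain ⟨he1, hq1, hF⟩ := hT.linked_of_mem (p := e) (q := q.symm) (he ▸ i.2) (hq' ▸ h') hef
      obtain ⟨c', hc'⟩ := (hT.peirce ⟨_, he1⟩ ⟨_, hq1⟩).exists_eq_smul_arc hef hne.symm
      have hc'0 : c' ≠ 0 := by
        rintro rfl
        exact hF (by rw [hc', zero_smul])
      have e1 : (⟨B.src e, he1⟩ : DT.I) = i := Subtype.ext he
      have e2 : (⟨B.src q.symm, hq1⟩ : DT.J) = ⟨k, h'⟩ := Subtype.ext hq'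
      rw [e1, e2] at hc'
      rw [hGe, hc', smul_mul_smul_comm, B.arc_mul_arc_self hef.symm hne] at hsum
      rcases smul_eq_zero.1 hsum with h3 | h3
      · exact (mul_ne_zero hc hc'0) h3
      · exact B.pathElt_cycleLength_ne_zero _ h3
    · intro i' _ hi'
      by_cases h0' : G ⟨k, h⟩ i' = 0
      · rw [h0', zero_mul]
      · obtain ⟨e', -, he', hef', -⟩ := harc i' h0'
        have := hT.eq_of_mem_left (he' ▸ i'.2) (he ▸ i.2) (hef'.trans hef.symm)
        exact absurd (Subtype.ext (by rw [← he', ← he, this])) hi'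
    · simp
  · refine eq_zero_of_mem_branch (d := q.symm) (hG j i) (hSb _ (Or.inr j.2)) (hTb _ (Or.inl i.2))
      ?_ ?_
    · rwa [hq']
    · rw [hq']
      exact hi i

theorem homVanishes_of_mem_left
    (tS : IsIndecTwoTermPartialTilting S) (tT : IsIndecTwoTermPartialTilting T)
    (hS : IsStringMatrix B K DS.entry) (hT : IsStringMatrix B K DT.entry)
    (hk : DS.vertices ∩ DT.vertices = {k})
    (h : k ∈ DS.I) (h' : k ∈ DT.I) : HomVanishes S T (-1) := by
  obtain ⟨p, q, hp, hf, hl⟩ := hS.exists_linked_of_mem_left h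
  have ha := mem_arrows_of_linked hS hf hl
  obtain ⟨p', q', hp', hf', hl'⟩ := hT.exists_linked_of_mem_left h'
  have hb := mem_arrows_of_linked hT hf' hl'
  have hne : p ≠ p' := by
    rintro rfl
    exact notMem_arrows_of_inter_subset hk.subset ha hb
  obtain rfl : p' = p.symm := (B.src_eq_iff.1 (hp'.trans hp.symm)).resolve_left hne.symm
  have hSb : ∀ y, y ∈ DS.I ∨ y ∈ DS.J → y ∈ B.branch p.symm := fun y hy =>
    hS.mem_branch_of_not_linked (x := k)
      (fun c d hcd hcl => ⟨by
        rintro rfl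
        exact notMem_arrows_of_inter_subset hk.subset (mem_arrows_of_linked hS hcd hcl) hb,
        fun e => hS.disjoint k h (by rw [← hp', ← e]; exact hcl.2.1)⟩) (Or.inl h)
      (hp' ▸ B.src_mem_branch _) hy
  have hTb : ∀ y, y ∈ DT.I ∨ y ∈ DT.J → y ∈ B.branch p := fun y hy =>
    hT.mem_branch_of_not_linked (x := k)
      (fun c d hcd hcl => ⟨by
        rintro rfl
        exact notMem_arrows_of_inter_subset hk.subset ha (mem_arrows_of_linked hT hcd hcl),
        fun e => hT.disjoint k h' (by rw [← hp, ← e]; exact hcl.2.1)⟩) (Or.inl h')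
      (hp ▸ B.src_mem_branch _) hy
  rw [homVanishes_iff_matrix tS tT DS DT]
  intro G hG h1 _
  have hj : ∀ j : DS.J, j.1 ≠ k := fun j e => hS.disjoint _ h (e ▸ j.2)
  have harc : ∀ j : DS.J, G j ⟨k, h'⟩ ≠ 0 → ∃ (e : B.Arrow) (c : K), B.src e = j.1 ∧
      e.fst = p.fst ∧ e ≠ p ∧ c ≠ 0 ∧ G j ⟨k, h'⟩ = c • B.arc K e p := by
    intro j h0
    obtain ⟨e, e', c, he, he', hee, hne₁, hc, hG'⟩ :=
      (hG j ⟨k, h'⟩).exists_of_ne_zero (hj j) h0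
    rcases B.src_eq_iff.1 (he'.trans hp.symm) with rfl | rfl
    · exact ⟨e, c, he, hee, hne₁, hc, hG'⟩
    · have := B.eq_of_mem_branch_of_fst_mem (hSb j.1 (Or.inr j.2))
        (he ▸ B.mem_src_iff.2 (Or.inl hee.symm))
      exact absurd (this.trans hp') (hj j)
  ext j i
  by_cases hi : i.1 = k
  · obtain rfl : i = ⟨k, h'⟩ := Subtype.ext hi
    by_contra h0
    obtain ⟨e, c, he, hef, hne, hc, hGe⟩ := harc j h0
    have hsum := h1 ⟨k, h⟩ ⟨k, h'⟩
    rw [Finset.sum_eq_single j] at hsum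
    · obtain ⟨hp1, he1, hF⟩ := hS.linked_of_mem (p := p) (q := e) (hp ▸ h) (he ▸ j.2) hef.symm
      obtain ⟨c', hc'⟩ := (hS.peirce ⟨_, hp1⟩ ⟨_, he1⟩).exists_eq_smul_arc hef.symm hne.symm
      have hc'0 : c' ≠ 0 := by
        rintro rfl
        exact hF (by rw [hc', zero_smul])
      have e1 : (⟨B.src e, he1⟩ : DS.J) = j := Subtype.ext he
      have e2 : (⟨B.src p, hp1⟩ : DS.I) = ⟨k, h⟩ := Subtype.ext hp
      rw [e1, e2] at hc'
      rw [hGe, hc', smul_mul_smul_comm, B.arc_mul_arc_self hef.symm hne.symm] at hsum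
      rcases smul_eq_zero.1 hsum with h3 | h3
      · exact (mul_ne_zero hc'0 hc) h3
      · exact B.pathElt_cycleLength_ne_zero _ h3
    · intro j' _ hj'
      by_cases h0' : G j' ⟨k, h'⟩ = 0
      · rw [h0', mul_zero]
      · obtain ⟨e', -, he', hef', -⟩ := harc j' h0'
        have := hS.eq_of_mem_right (he' ▸ j'.2) (he ▸ j.2) (hef'.trans hef.symm)
        exact absurd (Subtype.ext (by rw [← he', ← he, this])) hj'
    · simp
  · refine eq_zero_of_mem_branch (d := p.symm) (hG j i) (hSb _ (Or.inr j.2)) (hTb _ (Or.inl i.2))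
      ?_ ?_
    · rw [hp']
      exact hj j
    · rwa [hp']

theorem not_homVanishes_of_sink_of_not_isMarked
    (tS : IsIndecTwoTermPartialTilting S) (tT : IsIndecTwoTermPartialTilting T)
    (hS : IsStringMatrix B K DS.entry) (hT : IsStringMatrix B K DT.entry)
    (hk : DS.vertices ∩ DT.vertices = {k})
    (h : k ∈ DS.J) (h' : ¬ DT.IsMarked k) : ¬ HomVanishes S T (-1) := by
  classical
  have hk' : k ∈ DS.vertices ∩ DT.vertices := hk ▸ rfl
  obtain ⟨p, q, δ, hf, hfδ, hl, rfl, hd0, hd, -, a, ha, haδ⟩ := exists_interior k hk'.2 h'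
  have hne : δ ≠ p := by
    rintro rfl
    exact h' (Or.inl hl.1)
  rw [homVanishes_iff_matrix tS tT DS DT]
  intro H
  have hG := H (fun j i => if j.1 = B.src δ ∧ i.1 = B.src p then B.arc K δ p else 0)
    (by
      intro j i
      simp only
      split_ifs with h
      · rw [h.1, h.2]; exact isPeirce_arc hfδ.symm hne
      · exact isPeirce_zero _ _)
    (by
      intro i i'
      refine Finset.sum_eq_zero fun j _ => ?_
      split_ifs with hji
      · by_cases h0 : DS.entry i j = 0
        · rw [h0, zero_mul]
        · obtain ⟨e, e', c, he, he', hee, hne', -, hc⟩ := hS.exists_of_ne_zero h0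
          obtain ⟨b, hb, hb'⟩ :=
            exists_mem_arrows_of_linked hS hee (linked_of_ne_zero he he' h0)
          have : e.fst ≠ δ.fst := by
            intro hx
            obtain rfl : e' = δ :=
              B.eq_of_src_eq_of_fst_eq (he'.trans hji.1) (hee.symm.trans hx)
            obtain rfl : b = a := B.next.injective (hb'.trans haδ.symm)
            exact notMem_arrows_of_inter_subset hk.subset hb ha
          rw [hc, smul_mul_assoc, B.arc_mul_arc_of_fst_ne hee hfδ.symm hne' hne this, smul_zero]
      · exact mul_zero _)
    (by
      intro j j'
      refine Finset.sum_eq_zero fun i _ => ?_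
      split_ifs with hji
      · by_cases h0 : DT.entry i j' = 0
        · rw [h0, mul_zero]
        · obtain ⟨e, e', c, he, he', hee, hne', -, hc⟩ := hT.exists_of_ne_zero h0
          rw [hc, mul_smul_comm]
          by_cases hx : δ.fst = e.fst
          · obtain rfl : e = p :=
              B.eq_of_src_eq_of_fst_eq (he.trans hji.2) (hx.symm.trans hfδ.symm)
            obtain rfl : e' = q :=
              hT.eq_of_mem_right (he' ▸ j'.2) hl.2.1 (hee.symm.trans hf)
            rw [B.arc_mul_arc_eq_zero hfδ.symm, smul_zero]
            have := B.dist_add_comm hfδ.symm hne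
            lia
          · rw [B.arc_mul_arc_of_fst_ne hfδ.symm hee hne hne' hx, smul_zero]
      · exact zero_mul _)
  have := congrFun (congrFun hG ⟨B.src δ, h⟩) ⟨B.src p, hl.1⟩
  simp only [and_self, if_true] at this
  exact B.arc_ne_zero hfδ.symm this

theorem not_homVanishes_of_not_isMarked_of_source
    (tS : IsIndecTwoTermPartialTilting S) (tT : IsIndecTwoTermPartialTilting T)
    (hS : IsStringMatrix B K DS.entry) (hT : IsStringMatrix B K DT.entry)
    (hk : DS.vertices ∩ DT.vertices = {k})
    (h : ¬ DS.IsMarked k) (h' : k ∈ DT.I) : ¬ HomVanishes S T (-1) := by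
  classical
  have hk' : k ∈ DS.vertices ∩ DT.vertices := hk ▸ rfl
  obtain ⟨p, q, δ, hf, hfδ, hl, rfl, hd0, hd, ha, -⟩ := exists_interior k hk'.1 h
  have hqδ : q.fst = δ.fst := hf.symm.trans hfδ
  have hne : q ≠ δ := by
    rintro rfl
    exact h (Or.inr hl.2.1)
  rw [homVanishes_iff_matrix tS tT DS DT]
  intro H
  have hG := H (fun j i => if j.1 = B.src q ∧ i.1 = B.src δ then B.arc K q δ else 0)
    (by
      intro j i
      simp only
      split_ifs with h
      · rw [h.1, h.2]; exact isPeirce_arc hqδ hne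
      · exact isPeirce_zero _ _)
    (by
      intro i i'
      refine Finset.sum_eq_zero fun j _ => ?_
      split_ifs with hji
      · by_cases h0 : DS.entry i j = 0
        · rw [h0, zero_mul]
        · obtain ⟨e, e', c, he, he', hee, hne', -, hc⟩ := hS.exists_of_ne_zero h0
          rw [hc, smul_mul_assoc]
          by_cases hx : e.fst = q.fst
          · obtain rfl : e' = q :=
              B.eq_of_src_eq_of_fst_eq (he'.trans hji.1) (hee.symm.trans hx)
            obtain rfl : e = p := hS.eq_of_mem_left (he ▸ i.2) hl.1 (hx.trans hf.symm)
            rw [B.arc_mul_arc_eq_zero hee, smul_zero]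
            have := B.dist_add hee hqδ
            lia
          · rw [B.arc_mul_arc_of_fst_ne hee hqδ hne' hne hx, smul_zero]
      · exact mul_zero _)
    (by
      intro j j'
      refine Finset.sum_eq_zero fun i _ => ?_
      split_ifs with hji
      · by_cases h0 : DT.entry i j' = 0
        · rw [h0, mul_zero]
        · obtain ⟨e, e', c, he, he', hee, hne', -, hc⟩ := hT.exists_of_ne_zero h0
          have hb := mem_arrows_of_linked hT hee (linked_of_ne_zero he he' h0)
          have : q.fst ≠ e.fst := by
            intro hx
            obtain rfl : e = δ :=
              B.eq_of_src_eq_of_fst_eq (he.trans hji.2) (hx.symm.trans hqδ)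
            exact notMem_arrows_of_inter_subset hk.subset ha hb
          rw [hc, mul_smul_comm, B.arc_mul_arc_of_fst_ne hqδ hee hne hne' this, smul_zero]
      · exact zero_mul _)
  have := congrFun (congrFun hG ⟨B.src q, hl.2.1⟩) ⟨B.src δ, h'⟩
  simp only [and_self, if_true] at this
  exact B.arc_ne_zero hqδ this

end Intersection

end Diagrams

theorem hom_vanishes_iff_single_vertex_intersection
    {K : Type u} [Field K] [IsAlgClosed K] {V : Type v} [Finite V] (B : BrauerTree V)
    [HasDerivedCategory.{w} (ModuleCat.{max u v} (B.Alg K))]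
    (Ti Tj : CochainComplex (ModuleCat.{max u v} (B.Alg K)) ℤ)
    (hi : IsIndecTwoTermPartialTilting Ti) (hj : IsIndecTwoTermPartialTilting Tj)
    (hpi : IsPresentation Ti) (hpj : IsPresentation Tj)
    (Di : TermDecomposition B K Ti) (Dj : TermDecomposition B K Tj)
    (k : B.Edge) (hk : Di.vertices ∩ Dj.vertices = {k}) :
    (HomVanishes Ti Tj (-1) ∧ HomVanishes Tj Ti (-1)) ↔
      ((¬ Di.IsMarked k ∧ ¬ Dj.IsMarked k) ∨
        (Di.IsDegreeOneSink k ∧ Dj.IsDegreeOneSink k) ∨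
        (Di.IsDegreeOneSource k ∧ Dj.IsDegreeOneSource k)) := by
  have hFi := isStringMatrix_entry hi hpi Di
  have hFj := isStringMatrix_entry hj hpj Dj
  have hk' : Dj.vertices ∩ Di.vertices = {k} := by rw [Set.inter_comm, hk]
  constructor
  · rintro ⟨hij, hji⟩
    by_cases mi : Di.IsMarked k
    · by_cases mj : Dj.IsMarked k
      · rcases mi with mi | mi <;> rcases mj with mj | mj
        · exact Or.inr (Or.inr ⟨isDegreeOneSource_of_mem hFi hFj hk.subset mi mj,
            isDegreeOneSource_of_mem hFj hFi hk'.subset mj mi⟩)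
        · exact absurd hji (not_homVanishes_of_mem hj hi hpj hpi Dj Di mj mi)
        · exact absurd hij (not_homVanishes_of_mem hi hj hpi hpj Di Dj mi mj)
        · exact Or.inr (Or.inl ⟨isDegreeOneSink_of_mem hFi hFj hk.subset mi mj,
            isDegreeOneSink_of_mem hFj hFi hk'.subset mj mi⟩)
      · rcases mi with mi | mi
        · exact absurd hji (not_homVanishes_of_not_isMarked_of_source hj hi hFj hFi hk' mj mi)
        · exact absurd hij (not_homVanishes_of_sink_of_not_isMarked hi hj hFi hFj hk mi mj)
    · by_cases mj : Dj.IsMarked k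
      · rcases mj with mj | mj
        · exact absurd hij (not_homVanishes_of_not_isMarked_of_source hi hj hFi hFj hk mi mj)
        · exact absurd hji (not_homVanishes_of_sink_of_not_isMarked hj hi hFj hFi hk' mj mi)
      · exact Or.inl ⟨mi, mj⟩
  · rintro (⟨mi, mj⟩ | ⟨⟨mi, -⟩, ⟨mj, -⟩⟩ | ⟨⟨mi, -⟩, ⟨mj, -⟩⟩)
    · exact ⟨homVanishes_of_not_isMarked hi hj hFi hFj hk mi mj,
        homVanishes_of_not_isMarked hj hi hFj hFi hk' mj mi⟩
    · exact ⟨homVanishes_of_mem_right hi hj hFi hFj hk mi mj,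
        homVanishes_of_mem_right hj hi hFj hFi hk' mj mi⟩
    · exact ⟨homVanishes_of_mem_left hi hj hFi hFj hk mi mj,
        homVanishes_of_mem_left hj hi hFj hFi hk' mj mi⟩
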